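/- arXiv:math-ph/0506042 — 3 statements merged into one kernel-verified Lean document; each statement's English description precedes it below -/
import Mathlib

section
/- Fix ν ∈ ℝ and define on D = {0 < β³ < β² < β¹}: Q(λ) = (β¹−λ)(λ−β²)(λ−β³), 𝒥_k = 2∫_{β²}^{β¹} λ^k Q^{−1/2} dλ for k ∈ {−1, 0, 1}, α₁ = −𝒥₁/𝒥₀, α₀ = −𝒥_{−1}/𝒥₀, v^i(β) = (2/√(β¹β²β³))(1 − ∏_{j≠i}(β^i−β^j)/(β^i(β^i+α₁))), ℋ₀(β) = −√(β¹β²β³) α₀(β), and 𝒩(β) = 1/β¹ + 1/β² + 1/β³ − ν + 2α₀(β). Then ℋ₀ and 𝒩 are differentiable on D and for each i = 1, 2, 3: ∂𝒩/∂β^i + v^i(β) · ∂ℋ₀/∂β^i = 0. Consequently, along any C¹ solution β(y,τ) of the Whitham equations ∂_τβ^i + v^i(β)∂_yβ^i = 0 one has ∂_τ(ℋ₀∘β) = ∂_y(𝒩∘β), i.e. the one-form ℋ₀ dy + 𝒩 dτ is closed, so dx = ℋ₀ dy + 𝒩 dτ, dt = dτ defines a reciprocal transformation for the averaged negative KdV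 flow. -/
/-!
The substitution `λ = β¹ sin²θ + β² cos²θ` makes the integrands of the periods smooth up to the
branch points, so that the periods `𝒥_f = 2 ∫ f(λ) Q(λ)^{-1/2} dλ` can be differentiated under the
integral sign. Integrating the exact differential `d (sin θ cos θ f(λ) / √(λ - β³))` over `[0, π/2]`
then gives two relations:

* `∏_{j ≠ i} (βⁱ - βʲ) ∂ᵢ𝒥_f = 𝒥_g + ½ (𝒥_{λf} - βⁱ 𝒥_f)` with `g = (df/dλ) ∏_{j ≠ i} (λ - βʲ)`;
* `∂ᵢ𝒥_{λf} = βⁱ ∂ᵢ𝒥_f + ½ 𝒥_f`.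

Applied to powers of `λ`, they express everything through `α₀` and `eᵢ = ∂ᵢ log 𝒥₀`. The first gives
`βⁱ + α₁ = -2 ∏_{j ≠ i} (βⁱ - βʲ) eᵢ`, which is nonzero because `-α₁` is a weighted mean of `λ` over
`(β², β¹)`; hence `vⁱ eᵢ = (1/βⁱ + 2 eᵢ) / √(β¹β²β³)`. The second gives
`∂ᵢℋ₀ = √(β¹β²β³) eᵢ (1/βⁱ + α₀)` and `∂ᵢ𝒩 = -(1/βⁱ + α₀) (1/βⁱ + 2 eᵢ)`, and these three formulas
combine to `∂ᵢ𝒩 + vⁱ ∂ᵢℋ₀ = 0`.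
-/

open Real Set Filter Topology MeasureTheory
open scoped Interval

namespace NegativeKdV

section ParametricIntegral

variable {E G : Type*} [NormedAddCommGroup E] [NormedSpace ℝ E]
  [NormedAddCommGroup G] [NormedSpace ℝ G] {F : E → ℝ → G} {x₀ : E} {a b : ℝ}

lemma hasFDerivAt_left_of_contDiffAt {x : E} {t : ℝ}
    (h : ContDiffAt ℝ 1 (Function.uncurry F) (x, t)) :
    HasFDerivAt (F · t)
      ((fderiv ℝ (Function.uncurry F) (x, t)).comp (.inl ℝ E ℝ)) x :=
  (h.differentiableAt one_ne_zero).hasFDerivAt.comp (f := (·, t)) x (hasFDerivAt_prodMk_left x t)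

lemma continuousOn_fderiv_left_of_contDiffAt
    (h : ∀ t ∈ [[a, b]], ContDiffAt ℝ 1 (Function.uncurry F) (x₀, t)) :
    ContinuousOn (fun t => fderiv ℝ (F · t) x₀) [[a, b]] := by
  have hjoint : ContinuousOn (fun t => (fderiv ℝ (Function.uncurry F) (x₀, t)).comp
      (.inl ℝ E ℝ)) [[a, b]] := fun t ht =>
    (((h t ht).continuousAt_fderiv one_ne_zero).comp
      (f := fun t => (x₀, t)) (by fun_prop)).continuousWithinAt.clm_comp continuousWithinAt_const
  exact hjoint.congr fun t ht => (hasFDerivAt_left_of_contDiffAt (h t ht)).fderiv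

theorem hasFDerivAt_intervalIntegral_of_contDiffAt
    (h : ∀ t ∈ [[a, b]], ContDiffAt ℝ 1 (Function.uncurry F) (x₀, t)) :
    HasFDerivAt (fun x => ∫ t in a..b, F x t) (∫ t in a..b, fderiv ℝ (F · t) x₀) x₀ := by
  have hF' := continuousOn_fderiv_left_of_contDiffAt h
  obtain ⟨C, hC⟩ := isCompact_uIcc.exists_bound_of_continuousOn hF'
  have hnear : ∀ᶠ x in 𝓝 x₀, ∀ t ∈ [[a, b]],
      ContDiffAt ℝ 1 (Function.uncurry F) (x, t) ∧ ‖fderiv ℝ (F · t) x‖ ≤ C + 1 := by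
    refine isCompact_uIcc.eventually_forall_of_forall_eventually fun t ht => ?_
    have hcont := ((h t ht).continuousAt_fderiv one_ne_zero).clm_comp
      (continuousAt_const (y := ContinuousLinearMap.inl ℝ E ℝ))
    have hlt := hC t ht
    rw [(hasFDerivAt_left_of_contDiffAt (h t ht)).fderiv] at hlt
    filter_upwards [(h t ht).eventually (by simp),
      hcont.norm.eventually_lt continuousAt_const (hlt.trans_lt (lt_add_one C))] with p hp hlt'
    exact ⟨hp, (hasFDerivAt_left_of_contDiffAt hp).fderiv ▸ hlt'.le⟩
  have hcont : ∀ᶠ x in 𝓝 x₀, ContinuousOn (F x) [[a, b]] := by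
    filter_upwards [hnear] with x hx t ht
    exact ((hx t ht).1.continuousAt.comp (f := fun t => (x, t)) (by fun_prop)).continuousWithinAt
  refine intervalIntegral.hasFDerivAt_integral_of_dominated_of_fderiv_le
    (F' := fun x t => fderiv ℝ (F · t) x) (bound := fun _ => C + 1) hnear ?_ ?_ ?_ ?_
    intervalIntegrable_const ?_
  · filter_upwards [hcont] with x hx
    exact (hx.mono uIoc_subset_uIcc).aestronglyMeasurable measurableSet_uIoc
  · exact hcont.self_of_nhds.intervalIntegrable
  · exact (hF'.mono uIoc_subset_uIcc).aestronglyMeasurable measurableSet_uIoc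
  · exact .of_forall fun t ht x hx => (hx t (uIoc_subset_uIcc ht)).2
  · exact .of_forall fun t ht x hx =>
      (hasFDerivAt_left_of_contDiffAt (hx t (uIoc_subset_uIcc ht)).1).differentiableAt.hasFDerivAt

end ParametricIntegral

lemma differentiableAt_sqrt_prod {ι : Type*} [Fintype ι] {b : ι → ℝ} (hb : ∀ j, 0 < b j) :
    DifferentiableAt ℝ (fun b : ι → ℝ => √(∏ j, b j)) b := by
  have hprod : ∏ j, b j ≠ 0 := (Finset.prod_pos fun j _ => hb j).ne'
  fun_prop (disch := exact hprod)

lemma differentiableAt_sum_one_div {ι : Type*} [Fintype ι] {b : ι → ℝ} (hb : ∀ j, b j ≠ 0) :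
    DifferentiableAt ℝ (fun b : ι → ℝ => ∑ j, 1 / b j) b := by
  fun_prop (disch := exact hb _)

/-- The partial derivative `∂F/∂bⁱ` of a function of finitely many real variables. -/
noncomputable def partialDeriv {ι : Type*} [Fintype ι] [DecidableEq ι] (i : ι)
    (F : (ι → ℝ) → ℝ) (b : ι → ℝ) : ℝ :=
  fderiv ℝ F b (Pi.single i 1)

section PartialDeriv

variable {ι : Type*} [Fintype ι] [DecidableEq ι] {F : (ι → ℝ) → ℝ} {b : ι → ℝ}

lemma hasDerivAt_comp_update (hF : DifferentiableAt ℝ F b) (i : ι) :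
    HasDerivAt (fun x => F (Function.update b i x)) (partialDeriv i F b) (b i) := by
  refine HasFDerivAt.comp_hasDerivAt (b i) ?_ (hasDerivAt_update b i (b i))
  rw [Function.update_eq_self]
  exact hF.hasFDerivAt

lemma partialDeriv_eq_of_hasDerivAt_comp_update {i : ι} {F' : ℝ} (hF : DifferentiableAt ℝ F b)
    (hF' : HasDerivAt (fun x => F (Function.update b i x)) F' (b i)) : partialDeriv i F b = F' :=
  (hasDerivAt_comp_update hF i).unique hF'

lemma partialDeriv_sum_comp {g : ℝ → ℝ} (hg : ∀ j, DifferentiableAt ℝ g (b j)) (i : ι) :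
    partialDeriv i (fun b => ∑ j, g (b j)) b = deriv g (b i) := by
  rw [partialDeriv, (HasFDerivAt.fun_sum fun j _ =>
    (hg j).hasDerivAt.comp_hasFDerivAt b (hasFDerivAt_apply j b)).fderiv]
  simp [Pi.single_apply]

lemma partialDeriv_sqrt_prod (hb : ∀ j, 0 < b j) (i : ι) :
    partialDeriv i (fun b => √(∏ j, b j)) b = √(∏ j, b j) / (2 * b i) := by
  have hprod : 0 < ∏ j, b j := Finset.prod_pos fun j _ => hb j
  refine partialDeriv_eq_of_hasDerivAt_comp_update (differentiableAt_sqrt_prod hb) ?_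
  have hsplit : ∏ j, b j = b i * ∏ j ∈ Finset.univ \ {i}, b j := by
    rw [← Finset.prod_update_of_mem (Finset.mem_univ i), Function.update_eq_self]
  simp only [Finset.prod_update_of_mem (Finset.mem_univ i)]
  rw [hsplit] at hprod ⊢
  refine (((hasDerivAt_id' (b i)).mul_const _).sqrt hprod.ne').congr_deriv ?_
  have hbi := hb i
  field_simp
  rw [div_sqrt]

lemma deriv_comp_eq_sum_partialDeriv {γ : ℝ → ι → ℝ} {t : ℝ} (hF : DifferentiableAt ℝ F (γ t))
    (hγ : DifferentiableAt ℝ γ t) :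
    deriv (fun s => F (γ s)) t = ∑ i, deriv (fun s => γ s i) t * partialDeriv i F (γ t) := by
  have hchain : deriv (fun s => F (γ s)) t = fderiv ℝ F (γ t) (deriv γ t) :=
    (hF.hasFDerivAt.comp_hasDerivAt t hγ.hasDerivAt).deriv
  rw [hchain, pi_eq_sum_univ' (deriv γ t), map_sum]
  refine Finset.sum_congr rfl fun i _ => ?_
  rw [map_smul, smul_eq_mul, partialDeriv, deriv_pi fun i => differentiableAt_pi.1 hγ i]

theorem deriv_comp_eq_deriv_comp_of_diagonal_system {H N : (ι → ℝ) → ℝ} {v : ι → ℝ}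
    {β : ℝ → ℝ → ι → ℝ} {y τ : ℝ}
    (hH : DifferentiableAt ℝ H (β y τ)) (hN : DifferentiableAt ℝ N (β y τ))
    (hy : DifferentiableAt ℝ (fun a => β a τ) y) (hτ : DifferentiableAt ℝ (β y) τ)
    (hHN : ∀ i, partialDeriv i N (β y τ) + v i * partialDeriv i H (β y τ) = 0)
    (hβ : ∀ i, deriv (fun s => β y s i) τ + v i * deriv (fun a => β a τ i) y = 0) :
    deriv (fun s => H (β y s)) τ = deriv (fun a => N (β a τ)) y := by
  rw [deriv_comp_eq_sum_partialDeriv hH hτ,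
    deriv_comp_eq_sum_partialDeriv (γ := fun a => β a τ) hN hy]
  refine Finset.sum_congr rfl fun i _ => ?_
  rw [eq_neg_of_add_eq_zero_left (hHN i), eq_neg_of_add_eq_zero_left (hβ i)]
  ring

end PartialDeriv

/-- The period `2 ∫ f(λ) Q(λ)^{-1/2} dλ` over `[β², β¹]` of the differential `f(λ) dλ / √Q`, where
`Q(λ) = (β¹ - λ)(λ - β²)(λ - β³)` and `(β¹, β², β³) = (b 0, b 1, b 2)`. -/
noncomputable def period (f : ℝ → ℝ) (b : Fin 3 → ℝ) : ℝ :=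
  2 * ∫ l in b 1..b 0, f l / √((b 0 - l) * (l - b 1) * (l - b 2))

/-- The substitution `λ = β¹ sin²θ + β² cos²θ`, which parametrizes the cut `[β², β¹]` by
`θ ∈ [0, π/2]`. -/
noncomputable def cutPoint (b : Fin 3 → ℝ) (θ : ℝ) : ℝ := b 0 * sin θ ^ 2 + b 1 * cos θ ^ 2

/-- A quarter of the integrand of `period f b` in the variable `θ` of `cutPoint`. Unlike the
original integrand it is regular at the branch points `β¹` and `β²`. -/
noncomputable def trigIntegrand (f : ℝ → ℝ) (b : Fin 3 → ℝ) (θ : ℝ) : ℝ :=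
  f (cutPoint b θ) / √(cutPoint b θ - b 2)

/-- The monic polynomial `∏ⱼ (l - bʲ)` with the factor of the branch point `bⁱ` removed. -/
noncomputable def cofactor {ι : Type*} [Fintype ι] [DecidableEq ι] (i : ι) (b : ι → ℝ)
    (l : ℝ) : ℝ :=
  ∏ j with j ≠ i, (l - b j)

lemma cofactor_fin_three (b : Fin 3 → ℝ) (l : ℝ) (i : Fin 3) :
    cofactor i b l = ![(l - b 1) * (l - b 2), (l - b 0) * (l - b 2), (l - b 0) * (l - b 1)] i := by
  fin_cases i <;> simp [cofactor, Finset.prod_filter, Fin.prod_univ_three]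

section Periods

variable {b : Fin 3 → ℝ} {f : ℝ → ℝ}

lemma cutPoint_sub_apply_one (b : Fin 3 → ℝ) (θ : ℝ) :
    cutPoint b θ - b 1 = (b 0 - b 1) * sin θ ^ 2 := by
  rw [cutPoint, cos_sq']
  ring

lemma apply_zero_sub_cutPoint (b : Fin 3 → ℝ) (θ : ℝ) :
    b 0 - cutPoint b θ = (b 0 - b 1) * cos θ ^ 2 := by
  rw [cutPoint, sin_sq]
  ring

lemma cutPoint_mem_Icc (hb : StrictAnti b) (θ : ℝ) : cutPoint b θ ∈ Icc (b 1) (b 0) := by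
  have h : 0 < b 0 - b 1 := sub_pos.2 (hb (by decide))
  exact ⟨sub_nonneg.1 (cutPoint_sub_apply_one b θ ▸ by positivity),
    sub_nonneg.1 (apply_zero_sub_cutPoint b θ ▸ by positivity)⟩

lemma sin_pos_and_cos_pos_of_mem_Ioo {θ : ℝ} (hθ : θ ∈ Ioo 0 (π / 2)) : 0 < sin θ ∧ 0 < cos θ :=
  ⟨sin_pos_of_pos_of_lt_pi hθ.1 (by linarith [hθ.2, pi_pos]),
    cos_pos_of_mem_Ioo ⟨by linarith [hθ.1, pi_pos], hθ.2⟩⟩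

lemma cutPoint_mem_Ioo (hb : StrictAnti b) {θ : ℝ} (hθ : θ ∈ Ioo 0 (π / 2)) :
    cutPoint b θ ∈ Ioo (b 1) (b 0) := by
  have h : 0 < b 0 - b 1 := sub_pos.2 (hb (by decide))
  obtain ⟨hs, hc⟩ := sin_pos_and_cos_pos_of_mem_Ioo hθ
  exact ⟨sub_pos.1 (cutPoint_sub_apply_one b θ ▸ by positivity),
    sub_pos.1 (apply_zero_sub_cutPoint b θ ▸ by positivity)⟩

lemma cutPoint_sub_apply_two_pos (hb : StrictAnti b) (θ : ℝ) : 0 < cutPoint b θ - b 2 :=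
  sub_pos.2 <| (hb (by decide : (1 : Fin 3) < 2)).trans_le (cutPoint_mem_Icc hb θ).1

lemma sqrt_cutPoint_sub_apply_two_pos (hb : StrictAnti b) (θ : ℝ) : 0 < √(cutPoint b θ - b 2) :=
  sqrt_pos.2 (cutPoint_sub_apply_two_pos hb θ)

lemma hasDerivAt_cutPoint (b : Fin 3 → ℝ) (θ : ℝ) :
    HasDerivAt (cutPoint b) (2 * (b 0 - b 1) * (sin θ * cos θ)) θ := by
  refine ((((hasDerivAt_sin θ).pow 2).const_mul (b 0)).add
    (((hasDerivAt_cos θ).pow 2).const_mul (b 1))).congr_deriv ?_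
  push_cast
  ring

lemma continuous_cutPoint (b : Fin 3 → ℝ) : Continuous (cutPoint b) := by
  unfold cutPoint
  fun_prop

lemma sqrt_cubic_cutPoint (hb : StrictAnti b) {θ : ℝ} (hθ : θ ∈ Ioo 0 (π / 2)) :
    √((b 0 - cutPoint b θ) * (cutPoint b θ - b 1) * (cutPoint b θ - b 2))
      = (b 0 - b 1) * (sin θ * cos θ) * √(cutPoint b θ - b 2) := by
  have h : 0 < b 0 - b 1 := sub_pos.2 (hb (by decide))
  obtain ⟨hs, hc⟩ := sin_pos_and_cos_pos_of_mem_Ioo hθ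
  have hsq : (b 0 - cutPoint b θ) * (cutPoint b θ - b 1) = ((b 0 - b 1) * (sin θ * cos θ)) ^ 2 := by
    rw [apply_zero_sub_cutPoint, cutPoint_sub_apply_one]
    ring
  rw [sqrt_mul' _ (cutPoint_sub_apply_two_pos hb θ).le, hsq, sqrt_sq (by positivity)]

lemma period_eq_integral_trigIntegrand (hb : StrictAnti b) (f : ℝ → ℝ) :
    period f b = 4 * ∫ θ in (0)..(π / 2), trigIntegrand f b θ := by
  have h : 0 < b 0 - b 1 := sub_pos.2 (hb (by decide))
  have hpi : (0 : ℝ) ≤ π / 2 := by positivity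
  have hsubst := intervalIntegral.integral_comp_mul_deriv_of_deriv_nonneg
    (g := fun l => f l / √((b 0 - l) * (l - b 1) * (l - b 2)))
    (continuous_cutPoint b).continuousOn (fun θ _ => hasDerivAt_cutPoint b θ) (a := 0) (b := π / 2)
    (fun θ hθ => by
      rw [min_eq_left hpi, max_eq_right hpi] at hθ
      obtain ⟨hs, hc⟩ := sin_pos_and_cos_pos_of_mem_Ioo hθ
      positivity)
  have hzero : cutPoint b 0 = b 1 := by simp [cutPoint]
  have hend : cutPoint b (π / 2) = b 0 := by simp [cutPoint]
  have hintegrand : ∫ θ in (0)..(π / 2), ((fun l => f l / √((b 0 - l) * (l - b 1) * (l - b 2))) ∘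
      cutPoint b) θ * (2 * (b 0 - b 1) * (sin θ * cos θ))
        = ∫ θ in (0)..(π / 2), 2 * trigIntegrand f b θ := by
    simp only [intervalIntegral.integral_of_le hpi, integral_Ioc_eq_integral_Ioo]
    refine setIntegral_congr_fun measurableSet_Ioo fun θ hθ => ?_
    obtain ⟨hs, hc⟩ := sin_pos_and_cos_pos_of_mem_Ioo hθ
    have hq := sqrt_cutPoint_sub_apply_two_pos hb θ
    simp only [Function.comp, sqrt_cubic_cutPoint hb hθ, trigIntegrand]
    field_simp
  rw [hzero, hend] at hsubst
  rw [period, ← hsubst, hintegrand, intervalIntegral.integral_const_mul]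
  ring

lemma continuous_trigIntegrand (hb : StrictAnti b) (hf : ContinuousOn f (Icc (b 1) (b 0))) :
    Continuous (trigIntegrand f b) :=
  (hf.comp_continuous (continuous_cutPoint b) (cutPoint_mem_Icc hb)).div
    ((continuous_cutPoint b).sub continuous_const).sqrt
    fun θ => (sqrt_cutPoint_sub_apply_two_pos hb θ).ne'

lemma intervalIntegrable_trigIntegrand (hb : StrictAnti b)
    (hf : ContinuousOn f (Icc (b 1) (b 0))) :
    IntervalIntegrable (trigIntegrand f b) volume 0 (π / 2) :=
  (continuous_trigIntegrand hb hf).intervalIntegrable _ _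

lemma period_lt_period {g : ℝ → ℝ} (hb : StrictAnti b) (hf : ContinuousOn f (Icc (b 1) (b 0)))
    (hg : ContinuousOn g (Icc (b 1) (b 0))) (hfg : ∀ l ∈ Ioo (b 1) (b 0), f l < g l) :
    period f b < period g b := by
  have hf' := intervalIntegrable_trigIntegrand hb hf
  have hg' := intervalIntegrable_trigIntegrand hb hg
  have hpos := intervalIntegral.intervalIntegral_pos_of_pos_on (hg'.sub hf') (fun θ hθ =>
    sub_pos.2 <| div_lt_div_of_pos_right (hfg _ (cutPoint_mem_Ioo hb hθ))
      (sqrt_cutPoint_sub_apply_two_pos hb θ)) (by positivity)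
  rw [intervalIntegral.integral_sub hg' hf', sub_pos] at hpos
  simp only [period_eq_integral_trigIntegrand hb]
  linarith

lemma eventually_strictAnti {n : ℕ} {b : Fin (n + 1) → ℝ} (hb : StrictAnti b) :
    ∀ᶠ b' in 𝓝 b, StrictAnti b' := by
  simp only [Fin.strictAnti_iff_succ_lt] at hb ⊢
  exact eventually_all.2 fun i =>
    (continuous_apply _).continuousAt.eventually_lt (continuous_apply _).continuousAt (hb i)

lemma contDiffAt_trigIntegrand (hb : StrictAnti b)
    (hf : ∀ l ∈ Icc (b 1) (b 0), ContDiffAt ℝ 1 f l) (θ : ℝ) :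
    ContDiffAt ℝ 1 (Function.uncurry (trigIntegrand f)) (b, θ) := by
  have hcut : ContDiff ℝ 1 (fun p : (Fin 3 → ℝ) × ℝ => cutPoint p.1 p.2) := by
    unfold cutPoint
    fun_prop
  have hroot : ContDiffAt ℝ 1 (fun p : (Fin 3 → ℝ) × ℝ => √(cutPoint p.1 p.2 - p.1 2)) (b, θ) :=
    (hcut.sub (by fun_prop)).contDiffAt.sqrt (cutPoint_sub_apply_two_pos hb θ).ne'
  exact ((hf _ (cutPoint_mem_Icc hb θ)).comp (b, θ) hcut.contDiffAt).div hroot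
    (sqrt_cutPoint_sub_apply_two_pos hb θ).ne'

lemma hasFDerivAt_period (hb : StrictAnti b) (hf : ∀ l ∈ Icc (b 1) (b 0), ContDiffAt ℝ 1 f l) :
    HasFDerivAt (period f)
      ((4 : ℝ) • ∫ θ in (0)..(π / 2), fderiv ℝ (trigIntegrand f · θ) b) b := by
  refine ((hasFDerivAt_intervalIntegral_of_contDiffAt fun θ _ =>
    contDiffAt_trigIntegrand hb hf θ).const_mul 4).congr_of_eventuallyEq ?_
  filter_upwards [eventually_strictAnti hb] with b' hb'
  exact period_eq_integral_trigIntegrand hb' f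

lemma continuousOn_partialDeriv_trigIntegrand (hb : StrictAnti b)
    (hf : ∀ l ∈ Icc (b 1) (b 0), ContDiffAt ℝ 1 f l) (i : Fin 3) :
    ContinuousOn (fun θ => partialDeriv i (trigIntegrand f · θ) b) [[0, π / 2]] :=
  (continuousOn_fderiv_left_of_contDiffAt fun θ _ =>
    contDiffAt_trigIntegrand hb hf θ).clm_apply continuousOn_const

lemma partialDeriv_period (hb : StrictAnti b) (hf : ∀ l ∈ Icc (b 1) (b 0), ContDiffAt ℝ 1 f l)
    (i : Fin 3) :
    partialDeriv i (period f) b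
      = 4 * ∫ θ in (0)..(π / 2), partialDeriv i (trigIntegrand f · θ) b := by
  have hint := (continuousOn_fderiv_left_of_contDiffAt fun θ _ =>
    contDiffAt_trigIntegrand hb hf θ).intervalIntegrable (μ := volume) (a := 0) (b := π / 2)
  rw [partialDeriv, (hasFDerivAt_period hb hf).fderiv, smul_apply,
    ContinuousLinearMap.intervalIntegral_apply hint, smul_eq_mul]
  rfl

end Periods

section ReductionRelations

variable {b : Fin 3 → ℝ} {f : ℝ → ℝ} {θ : ℝ}

lemma hasFDerivAt_cutPoint_left (b : Fin 3 → ℝ) (θ : ℝ) :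
    HasFDerivAt (cutPoint · θ) (sin θ ^ 2 • ContinuousLinearMap.proj (R := ℝ) (φ := fun _ => ℝ) 0
      + cos θ ^ 2 • ContinuousLinearMap.proj (R := ℝ) (φ := fun _ => ℝ) 1) b :=
  ((hasFDerivAt_apply 0 b).mul_const _).add ((hasFDerivAt_apply 1 b).mul_const _)

lemma partialDeriv_cutPoint (b : Fin 3 → ℝ) (θ : ℝ) (i : Fin 3) :
    partialDeriv i (cutPoint · θ) b = ![sin θ ^ 2, cos θ ^ 2, 0] i := by
  rw [partialDeriv, (hasFDerivAt_cutPoint_left b θ).fderiv]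
  fin_cases i <;> simp

lemma partialDeriv_cutPoint_sub_apply_two (b : Fin 3 → ℝ) (θ : ℝ) (i : Fin 3) :
    partialDeriv i (fun b => cutPoint b θ - b 2) b = ![sin θ ^ 2, cos θ ^ 2, -1] i := by
  rw [partialDeriv, ((hasFDerivAt_cutPoint_left b θ).fun_sub (hasFDerivAt_apply 2 b)).fderiv]
  fin_cases i <;> simp

lemma partialDeriv_trigIntegrand (hb : StrictAnti b) (hf : DifferentiableAt ℝ f (cutPoint b θ))
    (i : Fin 3) :
    partialDeriv i (trigIntegrand f · θ) b
      = deriv f (cutPoint b θ) * ![sin θ ^ 2, cos θ ^ 2, 0] i / √(cutPoint b θ - b 2)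
        - f (cutPoint b θ) * ![sin θ ^ 2, cos θ ^ 2, -1] i / (2 * √(cutPoint b θ - b 2) ^ 3) := by
  have hq := sqrt_cutPoint_sub_apply_two_pos hb θ
  have hcut := (hasFDerivAt_cutPoint_left b θ).differentiableAt
  have hroot := (hcut.fun_sub (differentiableAt_apply 2 b)).hasFDerivAt.sqrt
    (cutPoint_sub_apply_two_pos hb θ).ne'
  have hquot := (hf.hasDerivAt.comp_hasFDerivAt b hcut.hasFDerivAt).mul
    ((hasDerivAt_inv hq.ne').comp_hasFDerivAt b hroot)
  rw [← partialDeriv_cutPoint b θ, ← partialDeriv_cutPoint_sub_apply_two b θ]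
  refine (congrArg (· (Pi.single i 1)) hquot.fderiv).trans ?_
  simp only [add_apply, smul_apply, smul_eq_mul, Function.comp_apply, partialDeriv]
  field_simp
  ring

/-- The function of `θ` whose exact differential yields the relations between periods. It vanishes
at both ends of `[0, π/2]`. -/
noncomputable def boundaryTerm (f : ℝ → ℝ) (b : Fin 3 → ℝ) (θ : ℝ) : ℝ :=
  sin θ * cos θ * trigIntegrand f b θ

lemma contDiff_boundaryTerm (hb : StrictAnti b) (hf : ∀ l ∈ Icc (b 1) (b 0), ContDiffAt ℝ 1 f l) :
    ContDiff ℝ 1 (boundaryTerm f b) :=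
  (contDiff_sin.mul contDiff_cos).mul <| contDiff_iff_contDiffAt.2 fun θ =>
    (contDiffAt_trigIntegrand hb hf θ).comp θ (contDiffAt_const.prodMk contDiffAt_id)

lemma intervalIntegrable_deriv_boundaryTerm (hb : StrictAnti b)
    (hf : ∀ l ∈ Icc (b 1) (b 0), ContDiffAt ℝ 1 f l) :
    IntervalIntegrable (deriv (boundaryTerm f b)) volume 0 (π / 2) :=
  ((contDiff_boundaryTerm hb hf).continuous_deriv le_rfl).intervalIntegrable _ _

lemma integral_deriv_boundaryTerm (hb : StrictAnti b)
    (hf : ∀ l ∈ Icc (b 1) (b 0), ContDiffAt ℝ 1 f l) :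
    ∫ θ in (0)..(π / 2), deriv (boundaryTerm f b) θ = 0 := by
  rw [intervalIntegral.integral_deriv_eq_sub
    (fun θ _ => (contDiff_boundaryTerm hb hf).differentiable one_ne_zero θ)
    (intervalIntegrable_deriv_boundaryTerm hb hf)]
  simp [boundaryTerm]

lemma deriv_boundaryTerm (hb : StrictAnti b) (hf : DifferentiableAt ℝ f (cutPoint b θ)) :
    deriv (boundaryTerm f b) θ
      = (cos θ ^ 2 - sin θ ^ 2) * f (cutPoint b θ) / √(cutPoint b θ - b 2)
        + (b 0 - b 1) * (sin θ * cos θ) ^ 2 * (2 * deriv f (cutPoint b θ) / √(cutPoint b θ - b 2)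
          - f (cutPoint b θ) / √(cutPoint b θ - b 2) ^ 3) := by
  have hq := sqrt_cutPoint_sub_apply_two_pos hb θ
  have hroot := ((hasDerivAt_cutPoint b θ).sub_const (b 2)).sqrt
    (cutPoint_sub_apply_two_pos hb θ).ne'
  have hquot := (hf.hasDerivAt.comp θ (hasDerivAt_cutPoint b θ)).div hroot hq.ne'
  refine (((hasDerivAt_sin θ).mul (hasDerivAt_cos θ)).mul hquot).deriv.trans ?_
  simp only [Function.comp_apply, Pi.div_apply, Pi.mul_apply]
  field_simp
  ring

lemma apply_two_eq_cutPoint_sub_sq_sqrt (hb : StrictAnti b) (θ : ℝ) :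
    b 2 = cutPoint b θ - √(cutPoint b θ - b 2) ^ 2 := by
  rw [sq_sqrt (cutPoint_sub_apply_two_pos hb θ).le, sub_sub_cancel]

lemma cutPoint_eq_add (b : Fin 3 → ℝ) (θ : ℝ) : cutPoint b θ = b 1 + (b 0 - b 1) * sin θ ^ 2 := by
  rw [← cutPoint_sub_apply_one, add_sub_cancel]

lemma cofactor_mul_partialDeriv_trigIntegrand (hb : StrictAnti b)
    (hf : DifferentiableAt ℝ f (cutPoint b θ)) (i : Fin 3) :
    cofactor i b (b i) * partialDeriv i (trigIntegrand f · θ) b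
      = trigIntegrand (fun l => deriv f l * cofactor i b l) b θ
        + 1 / 2 * (trigIntegrand (fun l => l * f l) b θ - b i * trigIntegrand f b θ)
        + (b 0 - b 1) / 2 * deriv (boundaryTerm f b) θ := by
  have hq := sqrt_cutPoint_sub_apply_two_pos hb θ
  have hb2 := apply_two_eq_cutPoint_sub_sq_sqrt hb θ
  rw [partialDeriv_trigIntegrand hb hf, deriv_boundaryTerm hb hf]
  simp only [trigIntegrand, mul_pow, cos_sq']
  generalize √(cutPoint b θ - b 2) = q at *
  fin_cases i <;> simp only [Fin.zero_eta, Fin.mk_one, Fin.reduceFinMk, cofactor_fin_three,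
    Matrix.cons_val, hb2] <;> field_simp <;> rw [cutPoint_eq_add] <;> ring

lemma partialDeriv_trigIntegrand_id_mul (hb : StrictAnti b)
    (hf : DifferentiableAt ℝ f (cutPoint b θ)) (i : Fin 3) :
    partialDeriv i (trigIntegrand (fun l => l * f l) · θ) b
      = b i * partialDeriv i (trigIntegrand f · θ) b + 1 / 2 * trigIntegrand f b θ
        + ![-1 / 2, 1 / 2, 0] i * deriv (boundaryTerm f b) θ := by
  have hq := sqrt_cutPoint_sub_apply_two_pos hb θ
  have hb2 := apply_two_eq_cutPoint_sub_sq_sqrt hb θ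
  have hderiv : deriv (fun l => l * f l) (cutPoint b θ)
      = f (cutPoint b θ) + cutPoint b θ * deriv f (cutPoint b θ) := by
    rw [deriv_fun_mul differentiableAt_fun_id hf, deriv_id'', one_mul]
  rw [partialDeriv_trigIntegrand hb hf, deriv_boundaryTerm hb hf,
    partialDeriv_trigIntegrand hb (differentiableAt_fun_id.fun_mul hf), hderiv]
  simp only [trigIntegrand, mul_pow, cos_sq']
  generalize √(cutPoint b θ - b 2) = q at *
  fin_cases i <;> simp only [Fin.zero_eta, Fin.mk_one, Fin.reduceFinMk, Matrix.cons_val, hb2] <;>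
    field_simp <;> rw [cutPoint_eq_add] <;> ring

theorem cofactor_mul_partialDeriv_period (hb : StrictAnti b)
    (hf : ∀ l ∈ Icc (b 1) (b 0), ContDiffAt ℝ 1 f l) (i : Fin 3) :
    cofactor i b (b i) * partialDeriv i (period f) b
      = period (fun l => deriv f l * cofactor i b l) b
        + 1 / 2 * (period (fun l => l * f l) b - b i * period f b) := by
  have hfc : ContinuousOn f (Icc (b 1) (b 0)) := continuousOn_of_forall_continuousAt
    fun l hl => (hf l hl).continuousAt
  have hf' : ContinuousOn (deriv f) (Icc (b 1) (b 0)) := continuousOn_of_forall_continuousAt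
    fun l hl => ((hf l hl).derivWithin (m := 0) (by simp)).continuousAt
  have hcof : Continuous (cofactor i b) := by unfold cofactor; fun_prop
  have hfInt := intervalIntegrable_trigIntegrand hb hfc
  have hmulInt := intervalIntegrable_trigIntegrand hb ((continuousOn_id' _).fun_mul hfc)
  have hcofInt := intervalIntegrable_trigIntegrand hb (hf'.fun_mul hcof.continuousOn)
  have hexact := intervalIntegrable_deriv_boundaryTerm hb hf
  rw [partialDeriv_period hb hf, mul_left_comm, ← intervalIntegral.integral_const_mul,
    intervalIntegral.integral_congr fun θ _ => cofactor_mul_partialDeriv_trigIntegrand hb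
      ((hf _ (cutPoint_mem_Icc hb θ)).differentiableAt one_ne_zero) i,
    intervalIntegral.integral_add (hcofInt.add ((hmulInt.sub (hfInt.const_mul _)).const_mul _))
      (hexact.const_mul _),
    intervalIntegral.integral_add hcofInt ((hmulInt.sub (hfInt.const_mul _)).const_mul _)]
  simp only [intervalIntegral.integral_const_mul, integral_deriv_boundaryTerm hb hf,
    period_eq_integral_trigIntegrand hb]
  rw [intervalIntegral.integral_sub hmulInt (hfInt.const_mul _),
    intervalIntegral.integral_const_mul]
  ring

theorem partialDeriv_period_id_mul (hb : StrictAnti b)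
    (hf : ∀ l ∈ Icc (b 1) (b 0), ContDiffAt ℝ 1 f l) (i : Fin 3) :
    partialDeriv i (period fun l => l * f l) b
      = b i * partialDeriv i (period f) b + 1 / 2 * period f b := by
  have hfInt := intervalIntegrable_trigIntegrand hb <| continuousOn_of_forall_continuousAt
    fun l hl => (hf l hl).continuousAt
  have hpartial := (continuousOn_partialDeriv_trigIntegrand hb hf i).intervalIntegrable
    (μ := volume)
  have hexact := intervalIntegrable_deriv_boundaryTerm hb hf
  rw [partialDeriv_period hb fun l hl => contDiffAt_fun_id.mul (hf l hl),
    intervalIntegral.integral_congr fun θ _ => partialDeriv_trigIntegrand_id_mul hb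
      ((hf _ (cutPoint_mem_Icc hb θ)).differentiableAt one_ne_zero) i,
    intervalIntegral.integral_add ((hpartial.const_mul _).add (hfInt.const_mul _))
      (hexact.const_mul _),
    intervalIntegral.integral_add (hpartial.const_mul _) (hfInt.const_mul _)]
  simp only [intervalIntegral.integral_const_mul, integral_deriv_boundaryTerm hb hf,
    partialDeriv_period hb hf, period_eq_integral_trigIntegrand hb]
  ring

end ReductionRelations

section Whitham

variable {b : Fin 3 → ℝ}

/-- The period `𝒥_k` of the differential `λ^k dλ / √Q`. -/
noncomputable def moment (k : ℤ) : (Fin 3 → ℝ) → ℝ := period fun l => l ^ k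

/-- The normalized period `α₀ = -𝒥₋₁ / 𝒥₀`. -/
noncomputable def α₀ (b : Fin 3 → ℝ) : ℝ := -moment (-1) b / moment 0 b

/-- The normalized period `α₁ = -𝒥₁ / 𝒥₀`. -/
noncomputable def α₁ (b : Fin 3 → ℝ) : ℝ := -moment 1 b / moment 0 b

/-- The characteristic velocity `vⁱ` of the Whitham equations of the negative KdV flow. -/
noncomputable def whithamVelocity (i : Fin 3) (b : Fin 3 → ℝ) : ℝ :=
  2 / √(∏ j, b j) * (1 - cofactor i b (b i) / (b i * (b i + α₁ b)))

/-- The averaged Casimir density `ℋ₀`. -/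
noncomputable def averagedCasimir (b : Fin 3 → ℝ) : ℝ := -√(∏ j, b j) * α₀ b

/-- The flux `𝒩` of `ℋ₀` along the averaged negative KdV flow. -/
noncomputable def averagedFlux (ν : ℝ) (b : Fin 3 → ℝ) : ℝ := ∑ j, 1 / b j - ν + 2 * α₀ b

/-- The logarithmic derivative `∂ᵢ log 𝒥₀` of the period of the holomorphic differential. -/
noncomputable def logDerivPeriod (i : Fin 3) (b : Fin 3 → ℝ) : ℝ :=
  partialDeriv i (moment 0) b / moment 0 b

lemma apply_pos_of_strictAnti (hb : StrictAnti b) (hpos : 0 < b 2) (i : Fin 3) : 0 < b i :=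
  hpos.trans_le (hb.antitone (Fin.le_last i))

lemma moment_add_one (k : ℤ) : moment (k + 1) = period fun l => l * l ^ k := by
  ext b
  have hne : ∀ᵐ l : ℝ, l ≠ 0 := compl_mem_ae_iff.2 (measure_singleton 0)
  rw [moment, period, period, intervalIntegral.integral_congr_ae]
  filter_upwards [hne] with l hl _
  rw [zpow_add_one₀ hl, mul_comm]

lemma contDiffAt_zpow_of_mem_Icc (hb : StrictAnti b) (hpos : 0 < b 2) (k : ℤ) :
    ∀ l ∈ Icc (b 1) (b 0), ContDiffAt ℝ 1 (fun x : ℝ => x ^ k) l := fun _ hl =>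
  (analyticAt_id.zpow ((apply_pos_of_strictAnti hb hpos 1).trans_le hl.1).ne').contDiffAt

lemma differentiableAt_moment (hb : StrictAnti b) (hpos : 0 < b 2) (k : ℤ) :
    DifferentiableAt ℝ (moment k) b :=
  (hasFDerivAt_period hb (contDiffAt_zpow_of_mem_Icc hb hpos k)).differentiableAt

lemma partialDeriv_moment_add_one (hb : StrictAnti b) (hpos : 0 < b 2) (k : ℤ) (i : Fin 3) :
    partialDeriv i (moment (k + 1)) b = b i * partialDeriv i (moment k) b + 1 / 2 * moment k b := by
  rw [moment_add_one]
  exact partialDeriv_period_id_mul hb (contDiffAt_zpow_of_mem_Icc hb hpos k) i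

lemma cofactor_mul_partialDeriv_moment_zero (hb : StrictAnti b) (i : Fin 3) :
    cofactor i b (b i) * partialDeriv i (moment 0) b
      = 1 / 2 * (moment 1 b - b i * moment 0 b) := by
  have h := cofactor_mul_partialDeriv_period hb (f := fun l => l ^ (0 : ℤ))
    (fun l _ => by simpa using contDiffAt_const) i
  simpa [moment, period] using h

lemma const_mul_moment (c : ℝ) : c * moment 0 b = period (fun _ => c) b := by
  simp only [moment, period, zpow_zero]
  rw [mul_left_comm, ← intervalIntegral.integral_const_mul]
  simp only [mul_one_div]

lemma moment_zero_pos (hb : StrictAnti b) : 0 < moment 0 b := by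
  have h := period_lt_period (f := fun _ => 0) (g := fun l => l ^ (0 : ℤ)) hb (by fun_prop)
    (by simp [continuousOn_const]) (by simp)
  simpa [moment, period] using h

lemma moment_one_mem_Ioo (hb : StrictAnti b) :
    moment 1 b ∈ Ioo (b 1 * moment 0 b) (b 0 * moment 0 b) := by
  simp only [const_mul_moment]
  simp only [moment, zpow_one]
  exact ⟨period_lt_period hb continuousOn_const (continuousOn_id' _) fun l hl => hl.1,
    period_lt_period hb (continuousOn_id' _) continuousOn_const fun l hl => hl.2⟩

lemma neg_α₁_mem_Ioo (hb : StrictAnti b) : -α₁ b ∈ Ioo (b 1) (b 0) := by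
  have hJ := moment_zero_pos hb
  obtain ⟨hlo, hhi⟩ := moment_one_mem_Ioo hb
  rw [α₁, neg_div, neg_neg]
  exact ⟨(lt_div_iff₀ hJ).2 hlo, (div_lt_iff₀ hJ).2 hhi⟩

lemma apply_add_α₁_ne_zero (hb : StrictAnti b) (i : Fin 3) : b i + α₁ b ≠ 0 := by
  obtain ⟨hlo, hhi⟩ := neg_α₁_mem_Ioo hb
  have h21 : b 2 < b 1 := hb (by decide)
  fin_cases i <;> grind

lemma apply_add_α₁ (hb : StrictAnti b) (i : Fin 3) :
    b i + α₁ b = -2 * (cofactor i b (b i) * logDerivPeriod i b) := by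
  have hJ := (moment_zero_pos hb).ne'
  rw [logDerivPeriod, ← mul_div_assoc, cofactor_mul_partialDeriv_moment_zero hb, α₁]
  field_simp
  ring

lemma whithamVelocity_mul_logDerivPeriod (hb : StrictAnti b) (i : Fin 3) (hi : b i ≠ 0) :
    whithamVelocity i b * logDerivPeriod i b
      = (1 / b i + 2 * logDerivPeriod i b) / √(∏ j, b j) := by
  have h := apply_add_α₁_ne_zero hb i
  rw [apply_add_α₁ hb, mul_ne_zero_iff, mul_ne_zero_iff] at h
  rw [whithamVelocity, apply_add_α₁ hb]
  obtain ⟨-, hcof, hlog⟩ := h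
  field_simp
  ring

lemma differentiableAt_α₀ (hb : StrictAnti b) (hpos : 0 < b 2) : DifferentiableAt ℝ α₀ b := by
  have hnum := differentiableAt_moment hb hpos (-1)
  have hden := differentiableAt_moment hb hpos 0
  unfold α₀
  fun_prop (disch := exact (moment_zero_pos hb).ne')

lemma partialDeriv_α₀ (hb : StrictAnti b) (hpos : 0 < b 2) (i : Fin 3) :
    partialDeriv i α₀ b
      = -(logDerivPeriod i b * (1 / b i + α₀ b)) - α₀ b / (2 * b i) := by
  have hJ := (moment_zero_pos hb).ne'
  have hbi := (apply_pos_of_strictAnti hb hpos i).ne'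
  have hrec := partialDeriv_moment_add_one hb hpos (-1) i
  rw [neg_add_cancel] at hrec
  have hquot := (hasDerivAt_comp_update (differentiableAt_moment hb hpos (-1)) i).neg.div
    (hasDerivAt_comp_update (differentiableAt_moment hb hpos 0) i) (by simpa using hJ)
  rw [partialDeriv_eq_of_hasDerivAt_comp_update (differentiableAt_α₀ hb hpos) hquot]
  simp only [Pi.neg_apply, Function.update_eq_self, logDerivPeriod, α₀, hrec]
  field_simp
  ring

lemma differentiableAt_averagedCasimir (hb : StrictAnti b) (hpos : 0 < b 2) :
    DifferentiableAt ℝ averagedCasimir b :=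
  (differentiableAt_sqrt_prod (apply_pos_of_strictAnti hb hpos)).neg.mul
    (differentiableAt_α₀ hb hpos)

lemma partialDeriv_averagedCasimir (hb : StrictAnti b) (hpos : 0 < b 2) (i : Fin 3) :
    partialDeriv i averagedCasimir b
      = √(∏ j, b j) * logDerivPeriod i b * (1 / b i + α₀ b) := by
  have hbpos := apply_pos_of_strictAnti hb hpos
  have hroot := hasDerivAt_comp_update (differentiableAt_sqrt_prod hbpos) i
  have hprod := hroot.neg.mul (hasDerivAt_comp_update (differentiableAt_α₀ hb hpos) i)
  rw [partialDeriv_eq_of_hasDerivAt_comp_update (differentiableAt_averagedCasimir hb hpos) hprod,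
    partialDeriv_sqrt_prod hbpos, partialDeriv_α₀ hb hpos]
  simp only [Pi.neg_apply, Function.update_eq_self]
  ring

lemma differentiableAt_averagedFlux (ν : ℝ) (hb : StrictAnti b) (hpos : 0 < b 2) :
    DifferentiableAt ℝ (averagedFlux ν) b :=
  ((differentiableAt_sum_one_div fun j => (apply_pos_of_strictAnti hb hpos j).ne').sub_const ν).add
    ((differentiableAt_α₀ hb hpos).const_mul 2)

lemma partialDeriv_averagedFlux (ν : ℝ) (hb : StrictAnti b) (hpos : 0 < b 2) (i : Fin 3) :
    partialDeriv i (averagedFlux ν) b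
      = -((1 / b i + α₀ b) * (1 / b i + 2 * logDerivPeriod i b)) := by
  have hne : ∀ j, b j ≠ 0 := fun j => (apply_pos_of_strictAnti hb hpos j).ne'
  have hsum := hasDerivAt_comp_update (differentiableAt_sum_one_div hne) i
  have hflux := (hsum.sub_const ν).add
    ((hasDerivAt_comp_update (differentiableAt_α₀ hb hpos) i).const_mul 2)
  rw [partialDeriv_eq_of_hasDerivAt_comp_update (differentiableAt_averagedFlux ν hb hpos) hflux,
    partialDeriv_sum_comp (g := fun l => 1 / l) (by fun_prop (disch := exact hne _)),
    partialDeriv_α₀ hb hpos]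
  have hbi := hne i
  simp only [one_div, deriv_inv']
  field_simp
  ring

theorem partialDeriv_averagedFlux_add_whithamVelocity_mul (ν : ℝ) (hb : StrictAnti b)
    (hpos : 0 < b 2) (i : Fin 3) :
    partialDeriv i (averagedFlux ν) b
      + whithamVelocity i b * partialDeriv i averagedCasimir b = 0 := by
  have hroot : √(∏ j, b j) ≠ 0 :=
    (sqrt_pos.2 (Finset.prod_pos fun j _ => apply_pos_of_strictAnti hb hpos j)).ne'
  have hv := whithamVelocity_mul_logDerivPeriod hb i (apply_pos_of_strictAnti hb hpos i).ne'
  rw [eq_div_iff hroot] at hv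
  rw [partialDeriv_averagedFlux ν hb hpos, partialDeriv_averagedCasimir hb hpos]
  linear_combination (1 / b i + α₀ b) * hv

end Whitham

section Vec3

lemma strictAnti_vec3 {x y z : ℝ} (hzy : z < y) (hyx : y < x) : StrictAnti ![x, y, z] := by
  simp [Fin.strictAnti_iff_succ_lt, Fin.forall_fin_two, hzy, hyx]

lemma hasDerivAt_comp_vec3 {F : (Fin 3 → ℝ) → ℝ} {x y z : ℝ}
    (hF : DifferentiableAt ℝ F ![x, y, z]) :
    HasDerivAt (fun t => F ![t, y, z]) (partialDeriv 0 F ![x, y, z]) x ∧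
    HasDerivAt (fun t => F ![x, t, z]) (partialDeriv 1 F ![x, y, z]) y ∧
    HasDerivAt (fun t => F ![x, y, t]) (partialDeriv 2 F ![x, y, z]) z := by
  have h0 : ∀ t, Function.update ![x, y, z] 0 t = ![t, y, z] := fun t => by
    ext i; fin_cases i <;> rfl
  have h1 : ∀ t, Function.update ![x, y, z] 1 t = ![x, t, z] := fun t => by
    ext i; fin_cases i <;> rfl
  have h2 : ∀ t, Function.update ![x, y, z] 2 t = ![x, y, t] := fun t => by
    ext i; fin_cases i <;> rfl
  exact ⟨by simpa [h0] using hasDerivAt_comp_update hF 0,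
    by simpa [h1] using hasDerivAt_comp_update hF 1,
    by simpa [h2] using hasDerivAt_comp_update hF 2⟩

lemma forall_fin_three {P : Fin 3 → Prop} : (∀ i, P i) ↔ P 0 ∧ P 1 ∧ P 2 := by
  rw [Fin.forall_fin_succ, Fin.forall_fin_two]
  rfl

end Vec3

theorem deriv_averagedCasimir_eq_deriv_averagedFlux (ν : ℝ) {β : ℝ → ℝ → Fin 3 → ℝ} {y τ : ℝ}
    (hb : StrictAnti (β y τ)) (hpos : 0 < β y τ 2)
    (hβ : DifferentiableAt ℝ (Function.uncurry β) (y, τ))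
    (hW : ∀ i, deriv (fun s => β y s i) τ
      + whithamVelocity i (β y τ) * deriv (fun a => β a τ i) y = 0) :
    deriv (fun s => averagedCasimir (β y s)) τ = deriv (fun a => averagedFlux ν (β a τ)) y :=
  deriv_comp_eq_deriv_comp_of_diagonal_system
    (differentiableAt_averagedCasimir hb hpos) (differentiableAt_averagedFlux ν hb hpos)
    (hβ.comp (f := fun a => (a, τ)) y (by fun_prop))
    (hβ.comp (f := fun s => (y, s)) τ (by fun_prop))
    (partialDeriv_averagedFlux_add_whithamVelocity_mul ν hb hpos) hW

end NegativeKdV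

open NegativeKdV

/-- the one-form `ℋ₀dy + 𝒩dτ` is closed along solutions of the negative KdV
Whitham system: `∂𝒩/∂β^i + v^i∂ℋ₀/∂β^i = 0` on `{0 < β³ < β² < β¹}`, and consequently
`∂_τ(ℋ₀∘β) = ∂_y(𝒩∘β)` along any C¹ solution, so `dx = ℋ₀dy + 𝒩dτ, dt = dτ` is a
reciprocal transformation for the averaged negative KdV flow. -/
theorem stmt_16 (ν : ℝ)
    (J0 J1 Jm1 a0 a1 v1 v2 v3 H0 N : ℝ → ℝ → ℝ → ℝ)
    (hJ0 : ∀ b1 b2 b3, J0 b1 b2 b3 =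
      2 * ∫ l in b2..b1, 1 / Real.sqrt ((b1 - l) * (l - b2) * (l - b3)))
    (hJ1 : ∀ b1 b2 b3, J1 b1 b2 b3 =
      2 * ∫ l in b2..b1, l / Real.sqrt ((b1 - l) * (l - b2) * (l - b3)))
    (hJm1 : ∀ b1 b2 b3, Jm1 b1 b2 b3 =
      2 * ∫ l in b2..b1, 1 / (l * Real.sqrt ((b1 - l) * (l - b2) * (l - b3))))
    (ha1 : ∀ b1 b2 b3, a1 b1 b2 b3 = -(J1 b1 b2 b3) / J0 b1 b2 b3)
    (ha0 : ∀ b1 b2 b3, a0 b1 b2 b3 = -(Jm1 b1 b2 b3) / J0 b1 b2 b3)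
    (hv1 : ∀ b1 b2 b3, v1 b1 b2 b3 = (2 / Real.sqrt (b1 * b2 * b3))
      * (1 - (b1 - b2) * (b1 - b3) / (b1 * (b1 + a1 b1 b2 b3))))
    (hv2 : ∀ b1 b2 b3, v2 b1 b2 b3 = (2 / Real.sqrt (b1 * b2 * b3))
      * (1 - (b2 - b1) * (b2 - b3) / (b2 * (b2 + a1 b1 b2 b3))))
    (hv3 : ∀ b1 b2 b3, v3 b1 b2 b3 = (2 / Real.sqrt (b1 * b2 * b3))
      * (1 - (b3 - b1) * (b3 - b2) / (b3 * (b3 + a1 b1 b2 b3))))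
    (hH0 : ∀ b1 b2 b3, H0 b1 b2 b3 = -Real.sqrt (b1 * b2 * b3) * a0 b1 b2 b3)
    (hN : ∀ b1 b2 b3, N b1 b2 b3 = 1 / b1 + 1 / b2 + 1 / b3 - ν + 2 * a0 b1 b2 b3) :
    (∀ b1 b2 b3 : ℝ, 0 < b3 → b3 < b2 → b2 < b1 →
      ∃ dH1 dH2 dH3 dN1 dN2 dN3 : ℝ,
        HasDerivAt (fun x => H0 x b2 b3) dH1 b1 ∧
        HasDerivAt (fun x => H0 b1 x b3) dH2 b2 ∧
        HasDerivAt (fun x => H0 b1 b2 x) dH3 b3 ∧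
        HasDerivAt (fun x => N x b2 b3) dN1 b1 ∧
        HasDerivAt (fun x => N b1 x b3) dN2 b2 ∧
        HasDerivAt (fun x => N b1 b2 x) dN3 b3 ∧
        dN1 + v1 b1 b2 b3 * dH1 = 0 ∧
        dN2 + v2 b1 b2 b3 * dH2 = 0 ∧
        dN3 + v3 b1 b2 b3 * dH3 = 0)
    ∧ (∀ B1 B2 B3 : ℝ → ℝ → ℝ,
        ContDiff ℝ 1 (fun p : ℝ × ℝ => B1 p.1 p.2) →
        ContDiff ℝ 1 (fun p : ℝ × ℝ => B2 p.1 p.2) →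
        ContDiff ℝ 1 (fun p : ℝ × ℝ => B3 p.1 p.2) →
        (∀ y τ, 0 < B3 y τ ∧ B3 y τ < B2 y τ ∧ B2 y τ < B1 y τ) →
        (∀ y τ, deriv (fun s => B1 y s) τ
          + v1 (B1 y τ) (B2 y τ) (B3 y τ) * deriv (fun a => B1 a τ) y = 0) →
        (∀ y τ, deriv (fun s => B2 y s) τ
          + v2 (B1 y τ) (B2 y τ) (B3 y τ) * deriv (fun a => B2 a τ) y = 0) →
        (∀ y τ, deriv (fun s => B3 y s) τ
          + v3 (B1 y τ) (B2 y τ) (B3 y τ) * deriv (fun a => B3 a τ) y = 0) →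
        ∀ y τ, deriv (fun s => H0 (B1 y s) (B2 y s) (B3 y s)) τ
          = deriv (fun a => N (B1 a τ) (B2 a τ) (B3 a τ)) y) := by
  have hα₀ : ∀ x y z, a0 x y z = α₀ ![x, y, z] := fun x y z => by
    simp [ha0, hJm1, hJ0, α₀, moment, period, div_eq_mul_inv, mul_comm]
  have hα₁ : ∀ x y z, a1 x y z = α₁ ![x, y, z] := fun x y z => by
    simp [ha1, hJ1, hJ0, α₁, moment, period]
  have hH : ∀ x y z, H0 x y z = averagedCasimir ![x, y, z] := fun x y z => by
    simp [hH0, hα₀, averagedCasimir, Fin.prod_univ_three]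
  have hflux : ∀ x y z, N x y z = averagedFlux ν ![x, y, z] := fun x y z => by
    simp [hN, hα₀, averagedFlux, Fin.sum_univ_three]
  have hv : ∀ i x y z, whithamVelocity i ![x, y, z] = ![v1 x y z, v2 x y z, v3 x y z] i := by
    intro i x y z
    fin_cases i <;> simp [hv1, hv2, hv3, hα₁, whithamVelocity, cofactor_fin_three,
      Fin.prod_univ_three]
  simp only [hH, hflux]
  refine ⟨fun b1 b2 b3 h3 h32 h21 => ?_, fun B1 B2 B3 hB1 hB2 hB3 hord hW1 hW2 hW3 y τ => ?_⟩
  · have hb : StrictAnti ![b1, b2, b3] := strictAnti_vec3 h32 h21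
    obtain ⟨hH1, hH2, hH3⟩ := hasDerivAt_comp_vec3 (differentiableAt_averagedCasimir hb h3)
    obtain ⟨hN1, hN2, hN3⟩ := hasDerivAt_comp_vec3 (differentiableAt_averagedFlux ν hb h3)
    have hrel := partialDeriv_averagedFlux_add_whithamVelocity_mul ν hb h3
    simp only [hv] at hrel
    exact ⟨_, _, _, _, _, _, hH1, hH2, hH3, hN1, hN2, hN3, forall_fin_three.1 hrel⟩
  · obtain ⟨h3, h32, h21⟩ := hord y τ
    exact deriv_averagedCasimir_eq_deriv_averagedFlux ν (β := fun y τ => ![B1 y τ, B2 y τ, B3 y τ])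
      (strictAnti_vec3 h32 h21) h3
      (differentiableAt_pi.2 <| forall_fin_three.2 ⟨hB1.differentiable one_ne_zero _,
        hB2.differentiable one_ne_zero _, hB3.differentiable one_ne_zero _⟩)
      (by simpa only [hv] using forall_fin_three.2 ⟨hW1 y τ, hW2 y τ, hW3 y τ⟩)
end

section
/- Fix ν ∈ ℝ and define on D = {0 < β³ < β² < β¹}: Q(λ) = (β¹−λ)(λ−β²)(λ−β³), 𝒥_k = 2∫_{β²}^{β¹} λ^k Q^{−1/2} dλ for k ∈ {−1,0,1}, α₁ = −𝒥₁/𝒥₀, α₀ = −𝒥_{−1}/𝒥₀, v^i(β) = (2/√(β¹β²β³))(1 − ∏_{j≠i}(β^i−β^j)/(β^i(β^i+α₁))), ℋ₀(β) = −√(β¹β²β³)α₀(β), 𝒩(β) = Σ_j 1/β^j − ν + 2α₀(β). Let β : ℝ² → D be a C¹ solution of the modulation equations of the first negative KdV flow, ∂_τ β^i + v^i(β) ∂_y β^i = 0; let x : ℝ² → ℝ be C¹ with ∂_y x = ℋ₀(β(y,τ)) > 0 and ∂_τ x = 𝒩(β(y,τ)); and let β̃ : ℝ² → D be differentiable with β̃(x(y,τ),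 τ) = β(y,τ). Then β̃ satisfies the Camassa–Holm modulation equations ∂_t β̃^i + C̃^i(β̃) ∂_x β̃^i = 0 at every image point, where C̃^i(β) = 1/β¹ + 1/β² + 1/β³ − ν + 2α₀ ∏_{j≠i}(β^i−β^j)/(β^i(β^i+α₁)). -/
/-!
The chain rule for `β(y, τ) = β̃(x(y, τ), τ)` gives `∂_y β = ∂_y x · ∂_x β̃` and
`∂_τ β = ∂_τ x · ∂_x β̃ + ∂_t β̃`, so the change of variables turns a velocity `v` into
`∂_τ x + v ∂_y x = 𝒩 + v ℋ₀`. The factor `√(β¹β²β³)` of the Casimir `ℋ₀` cancels the one in the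
denominator of `v^i`, and what is left of `𝒩 + v^i ℋ₀` is `C̃^i`.
-/

open scoped Topology

section ChainRule

variable {𝕜 E : Type*} [NontriviallyNormedField 𝕜] [NormedAddCommGroup E] [NormedSpace 𝕜 E]
  {f : 𝕜 → 𝕜 → E}

theorem hasDerivAt_comp_curried_fderiv {p q : 𝕜 → 𝕜} {p' q' r : 𝕜}
    (hf : DifferentiableAt 𝕜 (fun z : 𝕜 × 𝕜 => f z.1 z.2) (p r, q r))
    (hp : HasDerivAt p p' r) (hq : HasDerivAt q q' r) :
    HasDerivAt (fun t => f (p t) (q t))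
      (fderiv 𝕜 (fun z : 𝕜 × 𝕜 => f z.1 z.2) (p r, q r) (p', q')) r :=
  hf.hasFDerivAt.comp_hasDerivAt (f := fun t => (p t, q t)) r (hp.prodMk hq)

theorem hasDerivAt_comp_curried {p q : 𝕜 → 𝕜} {p' q' r : 𝕜}
    (hf : DifferentiableAt 𝕜 (fun z : 𝕜 × 𝕜 => f z.1 z.2) (p r, q r))
    (hp : HasDerivAt p p' r) (hq : HasDerivAt q q' r) :
    HasDerivAt (fun t => f (p t) (q t))
      (p' • deriv (fun a => f a (q r)) (p r) + q' • deriv (fun t => f (p r) t) (q r)) r := by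
  have hfst := hasDerivAt_comp_curried_fderiv (p := fun a => a) (q := fun _ => q r) hf
    (hasDerivAt_id' (p r)) (hasDerivAt_const _ _)
  have hsnd := hasDerivAt_comp_curried_fderiv (p := fun _ => p r) (q := fun t => t) hf
    (hasDerivAt_const _ _) (hasDerivAt_id' (q r))
  rw [hfst.deriv, hsnd.deriv]
  simpa only [← map_smul, ← map_add, Prod.smul_mk, Prod.mk_add_mk, smul_eq_mul, mul_one, mul_zero,
    add_zero, zero_add] using hasDerivAt_comp_curried_fderiv hf hp hq

theorem transport_reciprocal {g : 𝕜 → 𝕜 → E} {x : 𝕜 → 𝕜 → 𝕜} {y τ xy xτ : 𝕜}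
    (hf : DifferentiableAt 𝕜 (fun z : 𝕜 × 𝕜 => f z.1 z.2) (x y τ, τ))
    (hxy : HasDerivAt (fun a => x a τ) xy y) (hxτ : HasDerivAt (fun s => x y s) xτ τ)
    (hg : ∀ᶠ z : 𝕜 × 𝕜 in 𝓝 (y, τ), f (x z.1 z.2) z.2 = g z.1 z.2) (v : 𝕜) :
    deriv (fun s => g y s) τ + v • deriv (fun a => g a τ) y =
      deriv (fun t => f (x y τ) t) τ + (xτ + v * xy) • deriv (fun a => f a τ) (x y τ) := by
  have hgy : (fun a => f (x a τ) τ) =ᶠ[𝓝 y] fun a => g a τ :=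
    (Continuous.prodMk_left τ).tendsto y |>.eventually hg
  have hgτ : (fun s => f (x y s) s) =ᶠ[𝓝 τ] fun s => g y s :=
    (Continuous.prodMk_right y).tendsto τ |>.eventually hg
  rw [← hgy.deriv_eq, ← hgτ.deriv_eq,
    (hasDerivAt_comp_curried hf hxy (hasDerivAt_const y τ)).deriv,
    (hasDerivAt_comp_curried hf hxτ (hasDerivAt_id' τ)).deriv]
  module

end ChainRule

section Velocities

variable {ι : Type*} [Fintype ι]

/-- The averaged Casimir `ℋ₀ = -√(∏ β^j) α₀` of the second KdV Poisson bracket, the coefficient of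
`dy` in the reciprocal transformation. The number `α₀` is the value of the modulation parameter at
the point `β`. -/
noncomputable def averagedCasimir (α₀ : ℝ) (β : ι → ℝ) : ℝ :=
  -√(∏ j, β j) * α₀

/-- The flux `𝒩 = ∑ 1/β^j - ν + 2α₀` of the averaged Casimir, the coefficient of `dτ` in the
reciprocal transformation. -/
noncomputable def casimirFlux (ν α₀ : ℝ) (β : ι → ℝ) : ℝ :=
  ∑ j, 1 / β j - ν + 2 * α₀

/-- The Whitham velocity `v^i` of the first negative KdV flow. The number `r` stands for
`∏_{j ≠ i} (β^i - β^j) / (β^i (β^i + α₁))`, the only way in which `i` and `α₁` enter. -/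
noncomputable def negKdVVelocity (r : ℝ) (β : ι → ℝ) : ℝ :=
  2 / √(∏ j, β j) * (1 - r)

/-- The Camassa–Holm Whitham velocity `C̃^i` in the coordinates `β^i = 1/(u^i + ν)`, with `r` as in
`negKdVVelocity`. -/
noncomputable def camassaHolmVelocity (ν α₀ r : ℝ) (β : ι → ℝ) : ℝ :=
  ∑ j, 1 / β j - ν + 2 * α₀ * r

theorem casimirFlux_add_negKdVVelocity_mul_averagedCasimir (ν α₀ r : ℝ) {β : ι → ℝ}
    (hpos : 0 < ∏ j, β j) :
    casimirFlux ν α₀ β + negKdVVelocity r β * averagedCasimir α₀ β =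
      camassaHolmVelocity ν α₀ r β := by
  have hcancel : 2 / √(∏ j, β j) * √(∏ j, β j) = 2 :=
    div_mul_cancel₀ 2 (Real.sqrt_pos.2 hpos).ne'
  unfold casimirFlux negKdVVelocity averagedCasimir camassaHolmVelocity
  linear_combination -(α₀ * (1 - r)) * hcancel

theorem stmt_18_general (ν α₀ : ℝ) (r : ι → ℝ) {β βt : ℝ → ℝ → ι → ℝ} {x : ℝ → ℝ → ℝ} {y τ : ℝ}
    (hpos : 0 < ∏ j, β y τ j)
    (hβ : ∀ i, deriv (fun s => β y s i) τ
      + negKdVVelocity (r i) (β y τ) * deriv (fun a => β a τ i) y = 0)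
    (hxy : HasDerivAt (fun a => x a τ) (averagedCasimir α₀ (β y τ)) y)
    (hxτ : HasDerivAt (fun s => x y s) (casimirFlux ν α₀ (β y τ)) τ)
    (hβt : ∀ i, DifferentiableAt ℝ (fun z : ℝ × ℝ => βt z.1 z.2 i) (x y τ, τ))
    (hcomp : ∀ i, ∀ᶠ z : ℝ × ℝ in 𝓝 (y, τ), βt (x z.1 z.2) z.2 i = β z.1 z.2 i) (i : ι) :
    deriv (fun t => βt (x y τ) t i) τ
      + camassaHolmVelocity ν α₀ (r i) (β y τ) * deriv (fun a => βt a τ i) (x y τ) = 0 := by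
  rw [← casimirFlux_add_negKdVVelocity_mul_averagedCasimir ν α₀ (r i) hpos, ← hβ i]
  exact (transport_reciprocal (f := fun a t => βt a t i) (g := fun a s => β a s i)
    (hβt i) hxy hxτ (hcomp i) _).symm

end Velocities

/-- the reciprocal transformation `dx = ℋ₀dy + 𝒩dτ`, `dt = dτ`, generated by
the averaged Casimir `ℋ₀` of the second KdV Poisson bracket, maps solutions of the
modulation equations of the first negative KdV flow (velocities `v^i`) to solutions of the
Camassa–Holm modulation equations (velocities `C̃^i`) in the coordinates `β^i = 1/(u^i+ν)`. -/
theorem stmt_18 (ν : ℝ)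
    (J0 J1 Jm1 a0 a1 v1 v2 v3 H0 N Ct1 Ct2 Ct3 : ℝ → ℝ → ℝ → ℝ)
    (hJ0 : ∀ b1 b2 b3, J0 b1 b2 b3 =
      2 * ∫ l in b2..b1, 1 / Real.sqrt ((b1 - l) * (l - b2) * (l - b3)))
    (hJ1 : ∀ b1 b2 b3, J1 b1 b2 b3 =
      2 * ∫ l in b2..b1, l / Real.sqrt ((b1 - l) * (l - b2) * (l - b3)))
    (hJm1 : ∀ b1 b2 b3, Jm1 b1 b2 b3 =
      2 * ∫ l in b2..b1, 1 / (l * Real.sqrt ((b1 - l) * (l - b2) * (l - b3))))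
    (ha1 : ∀ b1 b2 b3, a1 b1 b2 b3 = -(J1 b1 b2 b3) / J0 b1 b2 b3)
    (ha0 : ∀ b1 b2 b3, a0 b1 b2 b3 = -(Jm1 b1 b2 b3) / J0 b1 b2 b3)
    (hv1 : ∀ b1 b2 b3, v1 b1 b2 b3 = (2 / Real.sqrt (b1 * b2 * b3))
      * (1 - (b1 - b2) * (b1 - b3) / (b1 * (b1 + a1 b1 b2 b3))))
    (hv2 : ∀ b1 b2 b3, v2 b1 b2 b3 = (2 / Real.sqrt (b1 * b2 * b3))
      * (1 - (b2 - b1) * (b2 - b3) / (b2 * (b2 + a1 b1 b2 b3))))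
    (hv3 : ∀ b1 b2 b3, v3 b1 b2 b3 = (2 / Real.sqrt (b1 * b2 * b3))
      * (1 - (b3 - b1) * (b3 - b2) / (b3 * (b3 + a1 b1 b2 b3))))
    (hH0 : ∀ b1 b2 b3, H0 b1 b2 b3 = -Real.sqrt (b1 * b2 * b3) * a0 b1 b2 b3)
    (hN : ∀ b1 b2 b3, N b1 b2 b3 = 1 / b1 + 1 / b2 + 1 / b3 - ν + 2 * a0 b1 b2 b3)
    (hCt1 : ∀ b1 b2 b3, Ct1 b1 b2 b3 = 1 / b1 + 1 / b2 + 1 / b3 - ν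
      + 2 * a0 b1 b2 b3 * ((b1 - b2) * (b1 - b3)) / (b1 * (b1 + a1 b1 b2 b3)))
    (hCt2 : ∀ b1 b2 b3, Ct2 b1 b2 b3 = 1 / b1 + 1 / b2 + 1 / b3 - ν
      + 2 * a0 b1 b2 b3 * ((b2 - b1) * (b2 - b3)) / (b2 * (b2 + a1 b1 b2 b3)))
    (hCt3 : ∀ b1 b2 b3, Ct3 b1 b2 b3 = 1 / b1 + 1 / b2 + 1 / b3 - ν
      + 2 * a0 b1 b2 b3 * ((b3 - b1) * (b3 - b2)) / (b3 * (b3 + a1 b1 b2 b3)))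
    (B1 B2 B3 : ℝ → ℝ → ℝ)
    (hB1 : ContDiff ℝ 1 (fun p : ℝ × ℝ => B1 p.1 p.2))
    (hB2 : ContDiff ℝ 1 (fun p : ℝ × ℝ => B2 p.1 p.2))
    (hB3 : ContDiff ℝ 1 (fun p : ℝ × ℝ => B3 p.1 p.2))
    (hdom : ∀ y τ, 0 < B3 y τ ∧ B3 y τ < B2 y τ ∧ B2 y τ < B1 y τ)
    (hw1 : ∀ y τ, deriv (fun s => B1 y s) τ
      + v1 (B1 y τ) (B2 y τ) (B3 y τ) * deriv (fun a => B1 a τ) y = 0)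
    (hw2 : ∀ y τ, deriv (fun s => B2 y s) τ
      + v2 (B1 y τ) (B2 y τ) (B3 y τ) * deriv (fun a => B2 a τ) y = 0)
    (hw3 : ∀ y τ, deriv (fun s => B3 y s) τ
      + v3 (B1 y τ) (B2 y τ) (B3 y τ) * deriv (fun a => B3 a τ) y = 0)
    (x : ℝ → ℝ → ℝ)
    (hx : ContDiff ℝ 1 (fun p : ℝ × ℝ => x p.1 p.2))
    (hxy : ∀ y τ, deriv (fun a => x a τ) y = H0 (B1 y τ) (B2 y τ) (B3 y τ))
    (hxypos : ∀ y τ, 0 < H0 (B1 y τ) (B2 y τ) (B3 y τ))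
    (hxτ : ∀ y τ, deriv (fun s => x y s) τ = N (B1 y τ) (B2 y τ) (B3 y τ))
    (Bt1 Bt2 Bt3 : ℝ → ℝ → ℝ)
    (hBt1 : Differentiable ℝ (fun p : ℝ × ℝ => Bt1 p.1 p.2))
    (hBt2 : Differentiable ℝ (fun p : ℝ × ℝ => Bt2 p.1 p.2))
    (hBt3 : Differentiable ℝ (fun p : ℝ × ℝ => Bt3 p.1 p.2))
    (hc1 : ∀ y τ, Bt1 (x y τ) τ = B1 y τ)
    (hc2 : ∀ y τ, Bt2 (x y τ) τ = B2 y τ)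
    (hc3 : ∀ y τ, Bt3 (x y τ) τ = B3 y τ) :
    ∀ y τ,
      (deriv (fun s => Bt1 (x y τ) s) τ
        + Ct1 (B1 y τ) (B2 y τ) (B3 y τ) * deriv (fun a => Bt1 a τ) (x y τ) = 0)
      ∧ (deriv (fun s => Bt2 (x y τ) s) τ
        + Ct2 (B1 y τ) (B2 y τ) (B3 y τ) * deriv (fun a => Bt2 a τ) (x y τ) = 0)
      ∧ (deriv (fun s => Bt3 (x y τ) s) τ
        + Ct3 (B1 y τ) (B2 y τ) (B3 y τ) * deriv (fun a => Bt3 a τ) (x y τ) = 0) := by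
  intro y τ
  obtain ⟨h3, h32, h21⟩ := hdom y τ
  have h2 := h3.trans h32
  let α₀ := a0 (B1 y τ) (B2 y τ) (B3 y τ)
  let α₁ := a1 (B1 y τ) (B2 y τ) (B3 y τ)
  let β : ℝ → ℝ → Fin 3 → ℝ := fun y τ => ![B1 y τ, B2 y τ, B3 y τ]
  let r : Fin 3 → ℝ := ![(B1 y τ - B2 y τ) * (B1 y τ - B3 y τ) / (B1 y τ * (B1 y τ + α₁)),
    (B2 y τ - B1 y τ) * (B2 y τ - B3 y τ) / (B2 y τ * (B2 y τ + α₁)),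
    (B3 y τ - B1 y τ) * (B3 y τ - B2 y τ) / (B3 y τ * (B3 y τ + α₁))]
  have hpos : 0 < ∏ j, β y τ j := by
    simpa [β, Fin.prod_univ_three] using mul_pos (mul_pos (h2.trans h21) h2) h3
  have hxd := hx.differentiable one_ne_zero
  have hxy' : HasDerivAt (fun a => x a τ) (averagedCasimir α₀ (β y τ)) y := by
    simpa [hxy, hH0, averagedCasimir, β, Fin.prod_univ_three] using
      (show DifferentiableAt ℝ (fun a => x a τ) y by fun_prop).hasDerivAt
  have hxτ' : HasDerivAt (fun s => x y s) (casimirFlux ν α₀ (β y τ)) τ := by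
    simpa [hxτ, hN, casimirFlux, β, Fin.sum_univ_three] using
      (show DifferentiableAt ℝ (fun s => x y s) τ by fun_prop).hasDerivAt
  have hβt := stmt_18_general ν α₀ r (βt := fun x t => ![Bt1 x t, Bt2 x t, Bt3 x t])
    (hpos := hpos) (hxy := hxy') (hxτ := hxτ')
    (hβ := by simp [Fin.forall_fin_succ, β, r, α₁, negKdVVelocity, Fin.prod_univ_three,
      ← hv1, ← hv2, ← hv3, hw1, hw2, hw3])
    (hβt := by simp [Fin.forall_fin_succ, hBt1 _, hBt2 _, hBt3 _])
    (hcomp := by simp [β, hc1, hc2, hc3])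
  simpa [Fin.forall_fin_succ, β, r, α₀, α₁, camassaHolmVelocity, Fin.sum_univ_three,
    hCt1, hCt2, hCt3, mul_div_assoc] using hβt
end

section
/- Let f : ℝ → ℝ be twice continuously differentiable and define q : ℝ³ → ℝ by q(u¹,u²,u³) = (1/(2√2 π)) ∫_{−1}^{1} ∫_{−1}^{1} f( ((1+μ)(1+η)/4) u¹ + ((1+μ)(1−η)/4) u² + ((1−μ)/2) u³ ) (1−μ)^{−1/2} (1−η²)^{−1/2} dμ dη. Then q is twice continuously differentiable, solves the linear overdetermined system of Euler–Poisson–Darboux type ∂_{u^i} q − ∂_{u^j} q = 2(u^i − u^j) ∂_{u^i}∂_{u^j} q for all i ≠ j in {1,2,3}, and satisfies the boundary condition q(u,u,u) = f(u) for all u ∈ ℝ. -/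
/-!
With `μ = 1 - 2 z²` and `e = cos θ`, the coefficients of `u¹, u², u³` become `x², y², z²`, where
`(x, y, z)` is the point of the unit sphere with height `z` and azimuth `θ / 2`, and the singular
weight becomes the constant multiple `2 √2 dθ dz` of the area form. Hence `q` is the average of
`f (x² u¹ + y² u² + z² u³)` over the sphere, and the boundary condition is immediate.

The integrand is now as regular in `u` as `f`, uniformly on a compact parameter domain, so one may
differentiate under the integral sign. Each partial derivative multiplies the integrand by the
matching square and replaces `f` by `f'`. The equation for, say, `u¹` and `u²` becomes the statement
that `(x² - y²) f' - 2 (u¹ - u²) x² y² f''` has mean zero. This function is the derivative of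
`x y f'` along the rotation field `x ∂_y - y ∂_x`, and rotations preserve area. In the coordinates
`(θ, z)` it is a divergence with vanishing boundary flux.
-/

open MeasureTheory Set Real Function
open scoped Matrix

section ParametricIntegral

variable {H S E : Type*} [NormedAddCommGroup H] [NormedSpace ℝ H] [NormedAddCommGroup E]
  [NormedSpace ℝ E] [MeasurableSpace S]

theorem hasFDerivAt_setIntegral_of_continuous [LocallyCompactSpace H] [TopologicalSpace S]
    [T2Space S] [SecondCountableTopology S] [OpensMeasurableSpace S] {μ : Measure S}
    [IsLocallyFiniteMeasure μ] {K : Set S} (hK : IsCompact K) {F : H → S → E}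
    {F' : H → S → H →L[ℝ] E} (hF : ∀ p, Continuous (F p)) (hF' : Continuous ↿F')
    (hderiv : ∀ p s, HasFDerivAt (F · s) (F' p s) p) (p : H) :
    HasFDerivAt (fun p => ∫ s in K, F p s ∂μ) (∫ s in K, F' p s ∂μ) p := by
  obtain ⟨U, hU, hpU⟩ := exists_compact_mem_nhds p
  obtain ⟨C, hC⟩ := (hU.prod hK).exists_bound_of_continuousOn hF'.continuousOn
  refine hasFDerivAt_integral_of_dominated_of_fderiv_le (bound := fun _ => C) hpU
    (.of_forall fun x => (hF x).aestronglyMeasurable)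
    ((hF p).continuousOn.integrableOn_compact hK)
    (hF'.comp (Continuous.prodMk_right p)).aestronglyMeasurable ?_
    (integrableOn_const hK.measure_ne_top) (.of_forall fun s x _ => hderiv x s)
  filter_upwards [ae_restrict_mem hK.measurableSet] with s hs x hx using hC (x, s) ⟨hx, hs⟩

theorem hasDerivAt_setIntegral_of_continuous [TopologicalSpace S] [T2Space S]
    [SecondCountableTopology S] [OpensMeasurableSpace S] {μ : Measure S}
    [IsLocallyFiniteMeasure μ] {K : Set S} (hK : IsCompact K) {F F' : ℝ → S → E}
    (hF : ∀ t, Continuous (F t)) (hF' : Continuous ↿F')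
    (hderiv : ∀ t s, HasDerivAt (F · s) (F' t s) t) (t : ℝ) :
    HasDerivAt (fun t => ∫ s in K, F t s ∂μ) (∫ s in K, F' t s ∂μ) t := by
  let L : ℝ → S → ℝ →L[ℝ] E := fun t s => ContinuousLinearMap.toSpanSingletonCLE (F' t s)
  have hL : Continuous ↿L := ContinuousLinearMap.toSpanSingletonCLE.continuous.comp hF'
  have hint : IntegrableOn (L t) K μ :=
    (hL.comp (Continuous.prodMk_right t)).continuousOn.integrableOn_compact hK
  refine (hasFDerivAt_setIntegral_of_continuous hK hF hL
    (fun t s => (hderiv t s).hasFDerivAt) t).hasDerivAt.congr_deriv ?_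
  simp [ContinuousLinearMap.integral_apply hint, L]

theorem contDiff_setIntegral [NormedAddCommGroup S] [NormedSpace ℝ S]
    [SecondCountableTopology S] [OpensMeasurableSpace S] {μ : Measure S}
    [IsLocallyFiniteMeasure μ] {K : Set S} (hK : IsCompact K) [FiniteDimensional ℝ H] (n : ℕ)
    {F : H → S → E} (hF : ContDiff ℝ n ↿F) :
    ContDiff ℝ n (fun p => ∫ s in K, F p s ∂μ) := by
  induction n generalizing F with
  | zero =>
    rw [Nat.cast_zero, contDiff_zero] at hF ⊢
    exact continuous_parametric_integral_of_continuous hF hK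
  | succ n ih =>
    rw [Nat.cast_succ] at hF ⊢
    have hFswap : ContDiff ℝ (n + 1) ↿fun (x : H × S) (p : H) => F p x.2 :=
      hF.comp (contDiff_snd.prodMk (contDiff_snd.comp contDiff_fst))
    have hF' : Continuous ↿fun p s => fderiv ℝ (F · s) p :=
      (ContDiff.fderiv (n := 0) hFswap contDiff_fst (by simp)).continuous
    have hderiv (p : H) : HasFDerivAt (fun p => ∫ s in K, F p s ∂μ)
        (∫ s in K, fderiv ℝ (F · s) p ∂μ) p :=
      hasFDerivAt_setIntegral_of_continuous hK
        (fun p => hF.continuous.comp (Continuous.prodMk_right p)) hF'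
        (fun p s => (hF.comp (contDiff_prodMk_left s)).differentiable (by simp) p |>.hasFDerivAt) p
    refine contDiff_succ_iff_fderiv_apply.2 ⟨fun p => (hderiv p).differentiableAt, by simp,
      fun v => ?_⟩
    have hint (p : H) : IntegrableOn (fun s => fderiv ℝ (F · s) p) K μ :=
      (hF'.comp (Continuous.prodMk_right p)).continuousOn.integrableOn_compact hK
    simp only [(hderiv _).fderiv, ContinuousLinearMap.integral_apply (hint _)]
    exact ih (hFswap.fderiv_apply contDiff_fst contDiff_const le_rfl)

end ParametricIntegral

/-- The Euler–Poisson–Darboux system `∂ᵢq - ∂ⱼq = 2 (uⁱ - uʲ) ∂ᵢ∂ⱼq`, `i ≠ j`, in any number of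
variables. Partial derivatives are encoded as derivatives along `Function.update`. -/
def IsEulerPoissonDarboux {ι : Type*} [DecidableEq ι] (q : (ι → ℝ) → ℝ) : Prop :=
  ∀ i j, i ≠ j → ∀ u : ι → ℝ,
    deriv (fun s => q (update u i s)) (u i) - deriv (fun s => q (update u j s)) (u j) =
      2 * (u i - u j) *
        deriv (fun s => deriv (fun t => q (update (update u i s) j t)) (u j)) (u i)

section RidgeIntegral

variable {S ι : Type*} [Fintype ι] [MeasurableSpace S]

/-- The superposition `u ↦ ∫_K k(s) g(w(s) · u) dμ(s)` of ridge functions. The factor `k` makes the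
family closed under partial differentiation. -/
noncomputable def ridgeIntegral (μ : Measure S) (K : Set S) (w : S → ι → ℝ) (k : S → ℝ)
    (g : ℝ → ℝ) (u : ι → ℝ) : ℝ :=
  ∫ s in K, k s * g (w s ⬝ᵥ u) ∂μ

theorem contDiff_ridgeIntegral [NormedAddCommGroup S] [NormedSpace ℝ S]
    [SecondCountableTopology S] [OpensMeasurableSpace S] {μ : Measure S}
    [IsLocallyFiniteMeasure μ] {K : Set S} (hK : IsCompact K) (n : ℕ) {w : S → ι → ℝ}
    {k : S → ℝ} {g : ℝ → ℝ} (hw : ContDiff ℝ n w) (hk : ContDiff ℝ n k) (hg : ContDiff ℝ n g) :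
    ContDiff ℝ n (ridgeIntegral μ K w k g) := by
  refine contDiff_setIntegral hK n (F := fun u s => k s * g (w s ⬝ᵥ u)) ?_
  simp only [HasUncurry.uncurry, id, dotProduct]
  fun_prop

variable [DecidableEq ι] [TopologicalSpace S] [T2Space S] [SecondCountableTopology S]
  [OpensMeasurableSpace S] {μ : Measure S} [IsLocallyFiniteMeasure μ] {K : Set S} {w : S → ι → ℝ}

theorem hasDerivAt_dotProduct_update (v u : ι → ℝ) (i : ι) (t : ℝ) :
    HasDerivAt (fun t => v ⬝ᵥ update u i t) (v i) t := by
  have h := hasDerivAt_pi.1 (hasDerivAt_update u i t)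
  simpa [dotProduct, Pi.single_apply] using
    HasDerivAt.fun_sum fun j (_ : j ∈ Finset.univ) => (h j).const_mul (v j)

theorem hasDerivAt_ridgeIntegral_update (hK : IsCompact K) (hw : Continuous w) {k : S → ℝ}
    (hk : Continuous k) {g : ℝ → ℝ} (hg : ContDiff ℝ 1 g) (u : ι → ℝ) (i : ι) (t : ℝ) :
    HasDerivAt (fun t => ridgeIntegral μ K w k g (update u i t))
      (ridgeIntegral μ K w (fun s => w s i * k s) (deriv g) (update u i t)) t := by
  have := hg.continuous_deriv le_rfl
  refine hasDerivAt_setIntegral_of_continuous hK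
    (F := fun t s => k s * g (w s ⬝ᵥ update u i t))
    (F' := fun t s => w s i * k s * deriv g (w s ⬝ᵥ update u i t)) ?_ ?_ (fun t s => ?_) t
  · have := hg.continuous
    fun_prop
  · fun_prop
  · refine (((hg.differentiable one_ne_zero _).hasDerivAt.comp t
      (hasDerivAt_dotProduct_update (w s) u i t)).const_mul (k s)).congr_deriv ?_
    ring

theorem isEulerPoissonDarboux_ridgeIntegral (hK : IsCompact K) (hw : Continuous w) {k : S → ℝ}
    (hk : Continuous k) {f : ℝ → ℝ} (hf : ContDiff ℝ 2 f)
    (hweights : ∀ i j, i ≠ j → ∀ u, ∫ s in K, k s * ((w s i - w s j) * deriv f (w s ⬝ᵥ u)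
      - 2 * (u i - u j) * (w s i * w s j * deriv (deriv f) (w s ⬝ᵥ u))) ∂μ = 0) :
    IsEulerPoissonDarboux (ridgeIntegral μ K w k f) := by
  intro i j hij u
  have hf' : ContDiff ℝ 1 (deriv f) := ((contDiff_succ_iff_deriv (n := 1)).1 hf).2.2
  have := hf'.continuous
  have := hf'.continuous_deriv le_rfl
  have hderiv (i : ι) (u : ι → ℝ) : deriv (fun t => ridgeIntegral μ K w k f (update u i t)) (u i)
      = ridgeIntegral μ K w (fun s => w s i * k s) (deriv f) u := by
    simpa using (hasDerivAt_ridgeIntegral_update (μ := μ) hK hw hk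
      (hf.of_le one_le_two) u i (u i)).deriv
  have hmixed : deriv (fun s => deriv (fun t =>
      ridgeIntegral μ K w k f (update (update u i s) j t)) (u j)) (u i)
      = ridgeIntegral μ K w (fun s => w s i * (w s j * k s)) (deriv (deriv f)) u := by
    have h := (hasDerivAt_ridgeIntegral_update (μ := μ) hK hw (k := fun s => w s j * k s)
      (by fun_prop) hf' u i (u i)).deriv
    rw [update_eq_self] at h
    rw [← h]
    refine congrArg (deriv · (u i)) (funext fun s => ?_)
    rw [← hderiv j (update u i s), update_of_ne hij.symm]
  rw [hderiv, hderiv, hmixed, ← sub_eq_zero, ← hweights i j hij u]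
  have hint {F : S → ℝ} (hF : Continuous F) : IntegrableOn F K μ :=
    hF.continuousOn.integrableOn_compact hK
  unfold ridgeIntegral
  rw [← integral_sub (hint (by fun_prop)) (hint (by fun_prop)), ← integral_const_mul,
    ← integral_sub (hint (by fun_prop)) (hint (by fun_prop))]
  refine congrArg (integral _) (funext fun s => ?_)
  ring

end RidgeIntegral

section Divergence

theorem hasDerivAt_comp_mk_left {E : Type*} [NormedAddCommGroup E] [NormedSpace ℝ E]
    {F : ℝ × ℝ → E} {F' : ℝ × ℝ →L[ℝ] E} {p : ℝ × ℝ} (h : HasFDerivAt F F' p) :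
    HasDerivAt (fun x => F (x, p.2)) (F' (1, 0)) p.1 :=
  h.comp_hasDerivAt p.1 ((hasDerivAt_id p.1).prodMk (hasDerivAt_const p.1 p.2))

theorem hasDerivAt_comp_mk_right {E : Type*} [NormedAddCommGroup E] [NormedSpace ℝ E]
    {F : ℝ × ℝ → E} {F' : ℝ × ℝ →L[ℝ] E} {p : ℝ × ℝ} (h : HasFDerivAt F F' p) :
    HasDerivAt (fun y => F (p.1, y)) (F' (0, 1)) p.2 :=
  h.comp_hasDerivAt p.2 ((hasDerivAt_const p.2 p.1).prodMk (hasDerivAt_id p.2))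

theorem integral_divergence_eq_zero_of_tangent {E : Type*} [NormedAddCommGroup E] [NormedSpace ℝ E]
    {a b : ℝ × ℝ} (hab : a ≤ b) {P Q Px Qy : ℝ × ℝ → E}
    (hP : ContDiff ℝ 1 P) (hQ : ContDiff ℝ 1 Q)
    (hPx : ∀ p, HasDerivAt (fun x => P (x, p.2)) (Px p) p.1)
    (hQy : ∀ p, HasDerivAt (fun y => Q (p.1, y)) (Qy p) p.2)
    (hPa : ∀ y, P (a.1, y) = 0) (hPb : ∀ y, P (b.1, y) = 0)
    (hQa : ∀ x, Q (x, a.2) = 0) (hQb : ∀ x, Q (x, b.2) = 0) :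
    ∫ p in Icc a b, (Px p + Qy p) = 0 := by
  have hP' (p) : HasFDerivAt P (fderiv ℝ P p) p := (hP.differentiable one_ne_zero p).hasFDerivAt
  have hQ' (p) : HasFDerivAt Q (fderiv ℝ Q p) p := (hQ.differentiable one_ne_zero p).hasFDerivAt
  have := hP.continuous_fderiv one_ne_zero
  have := hQ.continuous_fderiv one_ne_zero
  have hdiv := integral_divergence_prod_Icc_of_hasFDerivAt_of_le P Q _ _ a b hab
    hP.continuous.continuousOn hQ.continuous.continuousOn (fun p _ => hP' p) (fun p _ => hQ' p)
    (Continuous.continuousOn (by fun_prop) |>.integrableOn_compact isCompact_Icc)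
  simpa [hPa, hPb, hQa, hQb, fun p => (hPx p).unique (hasDerivAt_comp_mk_left (hP' p)),
    fun p => (hQy p).unique (hasDerivAt_comp_mk_right (hQ' p))] using hdiv

theorem integral_tangent_comp_eq_zero {a b : ℝ × ℝ} (hab : a ≤ b)
    {P Q W Px Qy Wx Wy : ℝ × ℝ → ℝ} {g : ℝ → ℝ} (hP : ContDiff ℝ 1 P) (hQ : ContDiff ℝ 1 Q)
    (hW : ContDiff ℝ 1 W) (hg : ContDiff ℝ 1 g)
    (hPx : ∀ p, HasDerivAt (fun x => P (x, p.2)) (Px p) p.1)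
    (hQy : ∀ p, HasDerivAt (fun y => Q (p.1, y)) (Qy p) p.2)
    (hWx : ∀ p, HasDerivAt (fun x => W (x, p.2)) (Wx p) p.1)
    (hWy : ∀ p, HasDerivAt (fun y => W (p.1, y)) (Wy p) p.2)
    (hPa : ∀ y, P (a.1, y) = 0) (hPb : ∀ y, P (b.1, y) = 0)
    (hQa : ∀ x, Q (x, a.2) = 0) (hQb : ∀ x, Q (x, b.2) = 0) :
    ∫ p in Icc a b, ((Px p + Qy p) * g (W p) + (P p * Wx p + Q p * Wy p) * deriv g (W p)) = 0 := by
  have hg' (t) : HasDerivAt g (deriv g t) t := (hg.differentiable one_ne_zero t).hasDerivAt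
  rw [← integral_divergence_eq_zero_of_tangent hab (hP.mul (hg.comp hW)) (hQ.mul (hg.comp hW))
    (fun p => (hPx p).mul ((hg' _).comp p.1 (hWx p)))
    (fun p => (hQy p).mul ((hg' _).comp p.2 (hWy p)))
    (by simp [hPa]) (by simp [hPb]) (by simp [hQa]) (by simp [hQb])]
  refine congrArg (integral _) (funext fun p => ?_)
  simp only [comp_apply]
  ring

end Divergence

section Sphere

/-- The squares of the Cartesian coordinates of the point of the unit sphere with height `p.2` and
azimuth `p.1 / 2`. The half angle makes them affine in `cos p.1`, and for `p ∈ [0, π] × [0, 1]` the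
point runs through the positive octant. -/
noncomputable def sphereSq (p : ℝ × ℝ) : Fin 3 → ℝ :=
  ![(1 - p.2 ^ 2) * (1 + cos p.1) / 2, (1 - p.2 ^ 2) * (1 - cos p.1) / 2, p.2 ^ 2]

theorem sphereSq_zero (p : ℝ × ℝ) : sphereSq p 0 = (1 - p.2 ^ 2) * (1 + cos p.1) / 2 := rfl

theorem sphereSq_one (p : ℝ × ℝ) : sphereSq p 1 = (1 - p.2 ^ 2) * (1 - cos p.1) / 2 := rfl

theorem sphereSq_two (p : ℝ × ℝ) : sphereSq p 2 = p.2 ^ 2 := rfl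

theorem sphereSq_dotProduct (p : ℝ × ℝ) (u : Fin 3 → ℝ) :
    sphereSq p ⬝ᵥ u = (1 - p.2 ^ 2) * (1 + cos p.1) / 2 * u 0 +
      (1 - p.2 ^ 2) * (1 - cos p.1) / 2 * u 1 + p.2 ^ 2 * u 2 := by
  simp only [dotProduct, Fin.sum_univ_three, sphereSq_zero, sphereSq_one, sphereSq_two]

theorem contDiff_sphereSq {n : WithTop ℕ∞} : ContDiff ℝ n sphereSq := by
  refine contDiff_pi.2 fun i => ?_
  fin_cases i <;>
    simp only [Fin.zero_eta, Fin.mk_one, Fin.reduceFinMk, sphereSq_zero, sphereSq_one,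
      sphereSq_two] <;>
    fun_prop

theorem hasDerivAt_sphereSq_dotProduct_azimuth (u : Fin 3 → ℝ) (p : ℝ × ℝ) :
    HasDerivAt (fun θ => sphereSq (θ, p.2) ⬝ᵥ u)
      (-((1 - p.2 ^ 2) * sin p.1 / 2 * (u 0 - u 1))) p.1 := by
  simp only [sphereSq_dotProduct]
  have hcos := hasDerivAt_cos p.1
  refine (((((hcos.const_add 1).const_mul (1 - p.2 ^ 2)).div_const 2).mul_const (u 0)).add
    ((((hcos.const_sub 1).const_mul (1 - p.2 ^ 2)).div_const 2).mul_const (u 1))).add_const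
    (p.2 ^ 2 * u 2) |>.congr_deriv ?_
  ring

theorem hasDerivAt_sphereSq_dotProduct_height (u : Fin 3 → ℝ) (p : ℝ × ℝ) :
    HasDerivAt (fun z => sphereSq (p.1, z) ⬝ᵥ u)
      (p.2 * (2 * u 2 - (1 + cos p.1) * u 0 - (1 - cos p.1) * u 1)) p.2 := by
  simp only [sphereSq_dotProduct]
  have hsq := hasDerivAt_pow 2 p.2
  refine ((((((hsq.const_sub 1).mul_const (1 + cos p.1)).div_const 2).mul_const (u 0)).add
    ((((hsq.const_sub 1).mul_const (1 - cos p.1)).div_const 2).mul_const (u 1))).add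
    (hsq.mul_const (u 2))).congr_deriv ?_
  ring

/- The identity is the vanishing flux of `g (x² u⁰ + y² u¹ + z² u²)` times the field
`(α (1 - z²) + β z²) sin θ ∂_θ + (z - z³) (γ + δ cos θ) ∂_z`. Suitable constants give the
rotation fields `xᵢ ∂ⱼ - xⱼ ∂ᵢ` multiplied by `xᵢ xⱼ`. -/
theorem integral_sphereSq_tangent_eq_zero {g : ℝ → ℝ} (hg : ContDiff ℝ 1 g) (u : Fin 3 → ℝ)
    (α β γ δ : ℝ) :
    ∫ p in Icc (0 : ℝ × ℝ) (π, 1),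
      (((α * (1 - p.2 ^ 2) + β * p.2 ^ 2) * cos p.1 +
          (1 - 3 * p.2 ^ 2) * (γ + δ * cos p.1)) * g (sphereSq p ⬝ᵥ u) +
        ((α * (1 - p.2 ^ 2) + β * p.2 ^ 2) * sin p.1 *
            -((1 - p.2 ^ 2) * sin p.1 / 2 * (u 0 - u 1)) +
          (p.2 - p.2 ^ 3) * (γ + δ * cos p.1) *
            (p.2 * (2 * u 2 - (1 + cos p.1) * u 0 - (1 - cos p.1) * u 1))) *
          deriv g (sphereSq p ⬝ᵥ u)) = 0 := by
  refine integral_tangent_comp_eq_zero (Prod.mk_le_mk.2 ⟨pi_nonneg, zero_le_one⟩)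
    (P := fun p => (α * (1 - p.2 ^ 2) + β * p.2 ^ 2) * sin p.1)
    (Q := fun p => (p.2 - p.2 ^ 3) * (γ + δ * cos p.1)) (by fun_prop) (by fun_prop) ?_ hg
    (fun p => (hasDerivAt_sin p.1).const_mul (α * (1 - p.2 ^ 2) + β * p.2 ^ 2)) (fun p => ?_)
    (hasDerivAt_sphereSq_dotProduct_azimuth u) (hasDerivAt_sphereSq_dotProduct_height u)
    (by simp) (by simp) (by simp) (by simp)
  · have := contDiff_sphereSq (n := 1)
    simp only [dotProduct]
    fun_prop
  · simpa using ((hasDerivAt_id p.2).sub (hasDerivAt_pow 3 p.2)).mul_const (γ + δ * cos p.1)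

theorem integral_sphereSq_weights_eq_zero {g : ℝ → ℝ} (hg : ContDiff ℝ 1 g) {i j : Fin 3}
    (hij : i ≠ j) (u : Fin 3 → ℝ) :
    ∫ p in Icc (0 : ℝ × ℝ) (π, 1), ((sphereSq p i - sphereSq p j) * g (sphereSq p ⬝ᵥ u)
      - 2 * (u i - u j) * (sphereSq p i * sphereSq p j * deriv g (sphereSq p ⬝ᵥ u))) = 0 := by
  wlog hlt : i < j generalizing i j
  · rw [← neg_eq_zero, ← integral_neg, ← this hij.symm (hij.lt_or_gt.resolve_left hlt)]
    refine congrArg (integral _) (funext fun p => ?_)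
    ring
  have hcases : i = 0 ∧ j = 1 ∨ i = 0 ∧ j = 2 ∨ i = 1 ∧ j = 2 := by omega
  obtain ⟨rfl, rfl⟩ | ⟨rfl, rfl⟩ | ⟨rfl, rfl⟩ := hcases
  · rw [← integral_sphereSq_tangent_eq_zero hg u 1 0 0 0]
    refine congrArg (integral _) (funext fun p => ?_)
    simp only [sphereSq_zero, sphereSq_one]
    linear_combination ((1 - p.2 ^ 2) ^ 2 * (u 0 - u 1) / 2 * deriv g (sphereSq p ⬝ᵥ u)) *
      sin_sq_add_cos_sq p.1
  · rw [← integral_sphereSq_tangent_eq_zero hg u 0 1 (1 / 2) (1 / 2)]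
    refine congrArg (integral _) (funext fun p => ?_)
    simp only [sphereSq_zero, sphereSq_two]
    linear_combination (p.2 ^ 2 * (1 - p.2 ^ 2) * (u 0 - u 1) / 2 * deriv g (sphereSq p ⬝ᵥ u)) *
      sin_sq_add_cos_sq p.1
  · rw [← integral_sphereSq_tangent_eq_zero hg u 0 (-1) (1 / 2) (-1 / 2)]
    refine congrArg (integral _) (funext fun p => ?_)
    simp only [sphereSq_one, sphereSq_two]
    linear_combination (-p.2 ^ 2 * (1 - p.2 ^ 2) * (u 0 - u 1) / 2 * deriv g (sphereSq p ⬝ᵥ u)) *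
      sin_sq_add_cos_sq p.1

/-- The average of `p ↦ f (x² u⁰ + y² u¹ + z² u²)` over the unit sphere, whose normalized area form
is `π⁻¹ dp` on `[0, π] × [0, 1]` in the coordinates of `sphereSq`. -/
noncomputable def sphereAverage (f : ℝ → ℝ) : (Fin 3 → ℝ) → ℝ :=
  ridgeIntegral volume (Icc 0 (π, 1)) sphereSq (fun _ => π⁻¹) f

theorem contDiff_sphereAverage {f : ℝ → ℝ} (n : ℕ) (hf : ContDiff ℝ n f) :
    ContDiff ℝ n (sphereAverage f) :=
  contDiff_ridgeIntegral isCompact_Icc n contDiff_sphereSq contDiff_const hf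

theorem isEulerPoissonDarboux_sphereAverage {f : ℝ → ℝ} (hf : ContDiff ℝ 2 f) :
    IsEulerPoissonDarboux (sphereAverage f) := by
  refine isEulerPoissonDarboux_ridgeIntegral isCompact_Icc (contDiff_sphereSq (n := 0)).continuous
    continuous_const hf fun i j hij u => ?_
  have hf' : ContDiff ℝ 1 (deriv f) := ((contDiff_succ_iff_deriv (n := 1)).1 hf).2.2
  rw [integral_const_mul, integral_sphereSq_weights_eq_zero hf' hij, mul_zero]

theorem sphereAverage_const (f : ℝ → ℝ) (t : ℝ) : sphereAverage f (fun _ => t) = f t := by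
  have harg (p : ℝ × ℝ) : sphereSq p ⬝ᵥ (fun _ => t) = t := by
    rw [sphereSq_dotProduct]
    ring
  have hvol : volume.real (Icc (0 : ℝ × ℝ) (π, 1)) = π := by
    rw [← Prod.mk_zero_zero, ← Icc_prod_Icc, Measure.volume_eq_prod, measureReal_prod_prod]
    simp [pi_nonneg]
  simp only [sphereAverage, ridgeIntegral, harg, setIntegral_const, hvol, smul_eq_mul]
  field_simp

end Sphere

section ChangeOfVariables

theorem integral_div_sqrt_one_sub_sq (g : ℝ → ℝ) :
    ∫ e in (-1 : ℝ)..1, g e / √(1 - e ^ 2) = ∫ θ in (0 : ℝ)..π, g (cos θ) := by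
  rw [← Polynomial.Chebyshev.integral_measureT_eq_integral_cos,
    Polynomial.Chebyshev.integral_measureT]
  simp only [sqrt_inv, div_eq_mul_inv]

theorem integral_div_sqrt_one_sub (g : ℝ → ℝ) :
    ∫ μ in (-1 : ℝ)..1, g μ / √(1 - μ) = 2 * √2 * ∫ z in (0 : ℝ)..1, g (1 - 2 * z ^ 2) := by
  have hderiv (z : ℝ) : HasDerivAt (fun z : ℝ => 1 - 2 * z ^ 2) (-(4 * z)) z :=
    (((hasDerivAt_pow 2 z).const_mul 2).const_sub 1).congr_deriv (by ring)
  have hcancel : EqOn (fun z => g (1 - 2 * z ^ 2) / √(1 - (1 - 2 * z ^ 2)) * -(4 * z))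
      (fun z => -(2 * √2 * g (1 - 2 * z ^ 2))) (Ioo 0 1) := fun z hz => by
    have hsqrt : √(1 - (1 - 2 * z ^ 2)) = √2 * z := by
      rw [sub_sub_cancel, sqrt_mul zero_le_two, sqrt_sq hz.1.le]
    have := hz.1.ne'
    simp only [hsqrt]
    field_simp
    rw [sq_sqrt zero_le_two]
    ring
  calc ∫ μ in (-1 : ℝ)..1, g μ / √(1 - μ)
      = -∫ μ in (1 - 2 * 0 ^ 2 : ℝ)..(1 - 2 * 1 ^ 2), g μ / √(1 - μ) := by
        rw [intervalIntegral.integral_symm]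
        norm_num
    _ = -∫ z in (0 : ℝ)..1, g (1 - 2 * z ^ 2) / √(1 - (1 - 2 * z ^ 2)) * -(4 * z) := by
        rw [← intervalIntegral.integral_comp_mul_deriv_of_deriv_nonpos
          (f := fun z => 1 - 2 * z ^ 2) (by fun_prop) (fun z _ => hderiv z) (fun z hz => ?_)]
        · rfl
        · rw [min_eq_left zero_le_one] at hz
          linarith [hz.1]
    _ = 2 * √2 * ∫ z in (0 : ℝ)..1, g (1 - 2 * z ^ 2) := by
        rw [intervalIntegral.integral_congr_Ioo_of_le zero_le_one hcancel,
          intervalIntegral.integral_neg, intervalIntegral.integral_const_mul, neg_neg]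

theorem setIntegral_Icc_prod_eq_intervalIntegral {E : Type*} [NormedAddCommGroup E]
    [NormedSpace ℝ E] {a b : ℝ × ℝ} (hab : a ≤ b) {F : ℝ × ℝ → E} (hF : Continuous F) :
    ∫ p in Icc a b, F p = ∫ x in a.1..b.1, ∫ y in a.2..b.2, F (x, y) := by
  have hint : IntegrableOn F (Icc a.1 b.1 ×ˢ Icc a.2 b.2) (volume.prod volume) :=
    hF.continuousOn.integrableOn_compact (isCompact_Icc.prod isCompact_Icc)
  rw [Icc_prod_eq, Measure.volume_eq_prod, setIntegral_prod _ hint]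
  simp only [intervalIntegral.integral_of_le hab.1, intervalIntegral.integral_of_le hab.2,
    integral_Icc_eq_integral_Ioc]

theorem integral_integral_eq_sphereAverage {f : ℝ → ℝ} (hf : Continuous f) (a b c : ℝ) :
    (1 / (2 * √2 * π)) * (∫ e in (-1 : ℝ)..1, ∫ μ in (-1 : ℝ)..1,
      f ((1 + μ) * (1 + e) / 4 * a + (1 + μ) * (1 - e) / 4 * b + (1 - μ) / 2 * c)
        / (√(1 - μ) * √(1 - e ^ 2))) = sphereAverage f ![a, b, c] := by
  have hsphere : Continuous fun p => π⁻¹ * f (sphereSq p ⬝ᵥ ![a, b, c]) := by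
    have := (contDiff_sphereSq (n := 0)).continuous
    fun_prop
  let A : ℝ → ℝ → ℝ := fun e μ =>
    f ((1 + μ) * (1 + e) / 4 * a + (1 + μ) * (1 - e) / 4 * b + (1 - μ) / 2 * c)
  have hA (θ z : ℝ) : A (cos θ) (1 - 2 * z ^ 2) = f (sphereSq (θ, z) ⬝ᵥ ![a, b, c]) := by
    simp only [A, sphereSq_dotProduct, Matrix.cons_val]
    congr 1
    ring
  calc 1 / (2 * √2 * π) * ∫ e in (-1 : ℝ)..1, ∫ μ in (-1 : ℝ)..1, A e μ / (√(1 - μ) * √(1 - e ^ 2))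
      = 1 / (2 * √2 * π) * ∫ θ in (0 : ℝ)..π, ∫ μ in (-1 : ℝ)..1, A (cos θ) μ / √(1 - μ) := by
        simp only [← div_div, intervalIntegral.integral_div]
        rw [integral_div_sqrt_one_sub_sq fun e => ∫ μ in (-1 : ℝ)..1, A e μ / √(1 - μ)]
    _ = ∫ θ in (0 : ℝ)..π, ∫ z in (0 : ℝ)..1, π⁻¹ * f (sphereSq (θ, z) ⬝ᵥ ![a, b, c]) := by
        simp only [integral_div_sqrt_one_sub, hA, intervalIntegral.integral_const_mul]
        field_simp
    _ = sphereAverage f ![a, b, c] :=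
        (setIntegral_Icc_prod_eq_intervalIntegral (Prod.mk_le_mk.2 ⟨pi_nonneg, zero_le_one⟩)
          hsphere).symm

end ChangeOfVariables

section Triples

variable {α : Type*} (a b c s : α)

theorem update_vec3_zero : update ![a, b, c] 0 s = ![s, b, c] := by
  ext i; fin_cases i <;> rfl

theorem update_vec3_one : update ![a, b, c] 1 s = ![a, s, c] := by
  ext i; fin_cases i <;> rfl

theorem update_vec3_two : update ![a, b, c] 2 s = ![a, b, s] := by
  ext i; fin_cases i <;> rfl

theorem vec3_const : ![a, a, a] = fun _ => a := by
  ext i; fin_cases i <;> rfl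

end Triples

theorem contDiff_vec3 {n : WithTop ℕ∞} :
    ContDiff ℝ n fun p : ℝ × ℝ × ℝ => ![p.1, p.2.1, p.2.2] := by
  refine contDiff_pi.2 fun i => ?_
  fin_cases i
  exacts [contDiff_fst, contDiff_fst.comp contDiff_snd, contDiff_snd.comp contDiff_snd]

/-- the explicit double-integral formula solves the Euler–Poisson–Darboux
system `∂_{u^i}q − ∂_{u^j}q = 2(u^i−u^j)∂_{u^i}∂_{u^j}q` (i ≠ j) with boundary condition
`q(u,u,u) = f(u)`, and `q` is twice continuously differentiable. -/
theorem stmt_19 (f : ℝ → ℝ) (hf : ContDiff ℝ 2 f)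
    (q : ℝ → ℝ → ℝ → ℝ)
    (hq : ∀ a b c, q a b c =
      (1 / (2 * Real.sqrt 2 * Real.pi)) *
        ∫ e in (-1:ℝ)..1, ∫ μ in (-1:ℝ)..1,
          f ((1 + μ) * (1 + e) / 4 * a + (1 + μ) * (1 - e) / 4 * b + (1 - μ) / 2 * c)
            / (Real.sqrt (1 - μ) * Real.sqrt (1 - e ^ 2))) :
    ContDiff ℝ 2 (fun p : ℝ × ℝ × ℝ => q p.1 p.2.1 p.2.2)
    ∧ (∀ a b c : ℝ,
        (deriv (fun s => q s b c) a - deriv (fun s => q a s c) b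
          = 2 * (a - b) * deriv (fun s => deriv (fun s' => q s s' c) b) a)
        ∧ (deriv (fun s => q a s c) b - deriv (fun s => q s b c) a
          = 2 * (b - a) * deriv (fun s => deriv (fun s' => q s' s c) a) b)
        ∧ (deriv (fun s => q s b c) a - deriv (fun s => q a b s) c
          = 2 * (a - c) * deriv (fun s => deriv (fun s' => q s b s') c) a)
        ∧ (deriv (fun s => q a b s) c - deriv (fun s => q s b c) a
          = 2 * (c - a) * deriv (fun s => deriv (fun s' => q s' b s) a) c)
        ∧ (deriv (fun s => q a s c) b - deriv (fun s => q a b s) c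
          = 2 * (b - c) * deriv (fun s => deriv (fun s' => q a s s') c) b)
        ∧ (deriv (fun s => q a b s) c - deriv (fun s => q a s c) b
          = 2 * (c - b) * deriv (fun s => deriv (fun s' => q a s' s) b) c))
    ∧ (∀ u : ℝ, q u u u = f u) := by
  have hqs (a b c : ℝ) : q a b c = sphereAverage f ![a, b, c] :=
    (hq a b c).trans (integral_integral_eq_sphereAverage hf.continuous a b c)
  have hepd {i j : Fin 3} (hij : i ≠ j) (a b c : ℝ) :=
    isEulerPoissonDarboux_sphereAverage hf i j hij ![a, b, c]
  simp only [hqs]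
  refine ⟨(contDiff_sphereAverage 2 hf).comp contDiff_vec3, fun a b c => ⟨?_, ?_, ?_, ?_, ?_, ?_⟩,
    fun u => vec3_const u ▸ sphereAverage_const f u⟩
  · simpa [update_vec3_zero, update_vec3_one] using hepd zero_ne_one a b c
  · simpa [update_vec3_zero, update_vec3_one] using hepd one_ne_zero a b c
  · simpa [update_vec3_zero, update_vec3_two] using hepd (show 0 ≠ 2 by decide) a b c
  · simpa [update_vec3_zero, update_vec3_two] using hepd (show 2 ≠ 0 by decide) a b c
  · simpa [update_vec3_one, update_vec3_two] using hepd (show 1 ≠ 2 by decide) a b c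
  · simpa [update_vec3_one, update_vec3_two] using hepd (show 2 ≠ 1 by decide) a b c
end
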